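/- For every n ≥ 1 the dual canonical basis elements satisfy B[n,0,0,n] = q^{n−1} B[n,0,0,n−1] u₀ − q^{2n} B[n−1,1,0,n−1] u₁ = q^{3n−1} u₀ B[n,0,0,n−1] − q^{2n−2} u₁ B[n−1,1,0,n−1] = q^{n−1} u₃ B[n−1,0,0,n] − q^{2n} u₂ B[n−1,0,1,n−1] = q^{3n−1} B[n−1,0,0,n] u₃ − q^{2n−2} B[n−1,0,1,n−1] u₂. -/

import Mathlib

noncomputable section

abbrev F : Type := RatFunc ℚ

/-- The deformation parameter `q`. -/
def qq : F := RatFunc.X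

/-- The quantum integer `[3] = q² + 1 + q⁻²`. -/
def box3 : F := qq ^ 2 + 1 + (qq⁻¹) ^ 2

/-- The generators `E₁, E₂` of the free algebra. -/
def gen (i : Fin 2) : FreeAlgebra F (Fin 2) := FreeAlgebra.ι F i

/-- The quantized Serre relations. -/
inductive SerreRel : FreeAlgebra F (Fin 2) → FreeAlgebra F (Fin 2) → Prop
  | rel1 : SerreRel
      (gen 0 ^ 3 * gen 1 - box3 • (gen 0 ^ 2 * gen 1 * gen 0)
        + box3 • (gen 0 * gen 1 * gen 0 ^ 2) - gen 1 * gen 0 ^ 3) 0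
  | rel2 : SerreRel
      (gen 1 ^ 3 * gen 0 - box3 • (gen 1 ^ 2 * gen 0 * gen 1)
        + box3 • (gen 1 * gen 0 * gen 1 ^ 2) - gen 0 * gen 1 ^ 3) 0

/-- `U = U_q(𝔫)`, the free algebra on `E₁, E₂` modulo the quantized Serre relations. -/
abbrev U : Type := RingQuot SerreRel

def E1 : U := RingQuot.mkAlgHom F SerreRel (gen 0)
def E2 : U := RingQuot.mkAlgHom F SerreRel (gen 1)

/-- `A = (1/(q+q⁻¹))(E₂E₁ − q⁻²E₁E₂)`. -/
def Aelt : U := (qq + qq⁻¹)⁻¹ • (E2 * E1 - (qq⁻¹) ^ 2 • (E1 * E2))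

def v0 : U := E1
def v1 : U := Aelt * v0 - v0 * Aelt
def v2 : U := Aelt * v1 - v1 * Aelt
def v3 : U := Aelt * v2 - v2 * Aelt

/-- `uᵢ = (1 − q⁻²)⁻²ⁱ vᵢ`. -/
def u0 : U := v0
def u1 : U := ((1 - (qq⁻¹) ^ 2)⁻¹) ^ 2 • v1
def u2 : U := ((1 - (qq⁻¹) ^ 2)⁻¹) ^ 4 • v2
def u3 : U := ((1 - (qq⁻¹) ^ 2)⁻¹) ^ 6 • v3

/-- `p₁ = u₃u₁ − q²u₂²`. -/
def p1 : U := u3 * u1 - qq ^ 2 • u2 ^ 2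
/-- `p₀ = u₂u₀ − q²u₁²`. -/
def p0 : U := u2 * u0 - qq ^ 2 • u1 ^ 2

/-- `S`, the subalgebra of `U` generated by `u₀, u₁, u₂, u₃`. -/
abbrev Sgen : Subalgebra F U := Algebra.adjoin F ({u0, u1, u2, u3} : Set U)

def us0 : Sgen := ⟨u0, Algebra.subset_adjoin (by simp)⟩
def us1 : Sgen := ⟨u1, Algebra.subset_adjoin (by simp)⟩
def us2 : Sgen := ⟨u2, Algebra.subset_adjoin (by simp)⟩
def us3 : Sgen := ⟨u3, Algebra.subset_adjoin (by simp)⟩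

/-- `p₁ = u₃u₁ − q²u₂²` as an element of `S`. -/
def ps1 : Sgen := us3 * us1 - qq ^ 2 • us2 ^ 2
/-- `p₀ = u₂u₀ − q²u₁²` as an element of `S`. -/
def ps0 : Sgen := us2 * us0 - qq ^ 2 • us1 ^ 2

/-- Index quadruples `a = (a₃, a₂, a₁, a₀)`. -/
abbrev Idx : Type := ℕ × ℕ × ℕ × ℕ

/-- The PBW monomial `u₃^{a₃}u₂^{a₂}u₁^{a₁}u₀^{a₀}`. -/
def mon (a : Idx) : Sgen := us3 ^ a.1 * us2 ^ a.2.1 * us1 ^ a.2.2.1 * us0 ^ a.2.2.2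

/-- `b(a) = C(a₃,2)+C(a₂,2)+C(a₁,2)+C(a₀,2)`. -/
def bexp (a : Idx) : ℕ :=
  Nat.choose a.1 2 + Nat.choose a.2.1 2 + Nat.choose a.2.2.1 2 + Nat.choose a.2.2.2 2

/-- The dual PBW basis element `E[a] = q^{b(a)} u₃^{a₃}u₂^{a₂}u₁^{a₁}u₀^{a₀}`. -/
def Ee (a : Idx) : Sgen := qq ^ bexp a • mon a

/-- `N(a) = (a₃+a₂+a₁+a₀)² − 7a₃ − 5a₂ − 3a₁ − a₀`. -/
def Nnum (a : Idx) : ℤ :=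
  ((a.1 : ℤ) + a.2.1 + a.2.2.1 + a.2.2.2) ^ 2
    - 7 * a.1 - 5 * a.2.1 - 3 * a.2.2.1 - a.2.2.2

/-- `a ⊴ b` iff `b − a ∈ ℕ·(−1,2,−1,0) + ℕ·(0,−1,2,−1)`. -/
def tri (a b : Idx) : Prop :=
  ∃ s r : ℕ,
    (b.1 : ℤ) = a.1 - s ∧
    (b.2.1 : ℤ) = a.2.1 + 2 * s - r ∧
    (b.2.2.1 : ℤ) = a.2.2.1 - s + 2 * r ∧
    (b.2.2.2 : ℤ) = a.2.2.2 - r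

/-- `S(a) = {b ∈ ℕ⁴ : a ⊴ b and a ≠ b}`. -/
def Sset (a : Idx) : Set Idx := {b | tri a b ∧ a ≠ b}

/-- Condition (i): `B[a] − E[a] ∈ Σ_{b ∈ S(a)} qℤ[q]·E[b]`. -/
def cond1 (B : Idx → Sgen) (a : Idx) : Prop :=
  ∃ φ : Idx →₀ Polynomial ℤ,
    (↑φ.support : Set Idx) ⊆ Sset a ∧
    B a - Ee a =
      φ.sum fun b p => (qq * Polynomial.eval₂ (Int.castRingHom F) qq p) • Ee b

/-- Hypotheses on the bar involution of coefficients `bar : q ↦ q⁻¹` and on the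
anti-automorphism `σ` of `S`: `σ` is an additive, anti-multiplicative bijection with
`σ(c(q)·x) = c(q⁻¹)·σ(x)` and `σ(uᵢ) = q^{2i}uᵢ`. -/
def SigmaHyp (bar : F →+* F) (σ : Sgen → Sgen) : Prop :=
  bar qq = qq⁻¹ ∧
  Function.Bijective σ ∧
  (∀ x y : Sgen, σ (x + y) = σ x + σ y) ∧
  (∀ x y : Sgen, σ (x * y) = σ y * σ x) ∧
  (∀ (c : F) (x : Sgen), σ (c • x) = bar c • σ x) ∧
  σ us0 = us0 ∧ σ us1 = qq ^ 2 • us1 ∧ σ us2 = qq ^ 4 • us2 ∧ σ us3 = qq ^ 6 • us3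

/-- The defining properties of the dual canonical basis `B`: for every `a ∈ ℕ⁴`,
`B[a] − E[a] ∈ Σ_{b ∈ S(a)} qℤ[q]·E[b]` and `σ(B[a]) = q^{−N(a)}B[a]`. -/
def DCB (bar : F →+* F) (σ : Sgen → Sgen) (B : Idx → Sgen) : Prop :=
  ∀ a : Idx, cond1 B a ∧ σ (B a) = qq ^ (-Nnum a) • B a

/-- Extension of `B` to integer quadruples by the convention that `B[a] = 0` whenever
some coordinate of `a` is negative. -/
def Bz (B : Idx → Sgen) (a : ℤ × ℤ × ℤ × ℤ) : Sgen :=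
  if 0 ≤ a.1 ∧ 0 ≤ a.2.1 ∧ 0 ≤ a.2.2.1 ∧ 0 ≤ a.2.2.2 then
    B (a.1.toNat, a.2.1.toNat, a.2.2.1.toNat, a.2.2.2.toNat)
  else 0

/-!
A dual canonical basis element is pinned down by its leading term together with being an
eigenvector of `σ` (Lusztig's lemma): a coefficient in `qℤ[q]` that is fixed by `q ↦ q⁻¹` vanishes.
It is therefore enough to exhibit elements with these two properties that visibly satisfy the
recursion.

Put `z = u₃u₀ - q²u₂u₁` and `c = q²p₀p₁`. These commute, and up to explicit powers of `q`,
`B[n,0,0,n]` is the Lucas polynomial `Lₙ₊₁` given by `L₀ = 0`, `L₁ = 1`,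
`Lₙ₊₂ = z Lₙ₊₁ - c Lₙ`, while `B[n+1,0,0,n]` is `Lₙ₊₁u₃ - q⁻²Lₙu₂p₁` and `B[n+1,1,0,n+1]` is
`B[n+1,0,0,n]p₀`. This gives the first formula. The symmetry `uᵢ ↔ u₃₋ᵢ` between the algebra and
its opposite gives the third, and applying `σ` to these two gives the other two.
-/

section LusztigLemma

variable {K ι ι' M N : Type*} [Field K] [AddCommGroup M] [Module K M] [AddCommGroup N] [Module K N]

/-- The lattice `∑_{b ∈ s} q A · E b` spanned over a coefficient ring `A ⊆ K`; the application has
`A = ℤ[q]`. -/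
def qLattice (A : Subring K) (q : K) (E : ι → M) (s : Set ι) : Submodule A M :=
  Submodule.span A ((fun b => q • E b) '' s)

/-- Condition (i) on a dual canonical basis element: `X ∈ E a + ∑ q A · E b`, the sum running over
the indices `b` with `r b a`. -/
def HasLeadingTerm (A : Subring K) (q : K) (r : ι → ι → Prop) (E : ι → M) (X : M) (a : ι) : Prop :=
  X - E a ∈ qLattice A q E {b | r b a}

variable {A : Subring K} {q : K} {r : ι → ι → Prop} {r' : ι' → ι' → Prop} {E B : ι → M}
  {E' : ι' → N} {X : M} {a b : ι}

theorem smul_mem_qLattice {s : Set ι} (hb : b ∈ s) : q • E b ∈ qLattice A q E s :=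
  Submodule.subset_span ⟨b, hb, rfl⟩

theorem qLattice_mono [IsTrans ι r] (h : r b a) :
    qLattice A q E {d | r d b} ≤ qLattice A q E {d | r d a} :=
  Submodule.span_mono (Set.image_mono fun _ hd => _root_.trans hd h)

theorem map_mem_of_mem_qLattice (f : M →ₗ[K] N) {s : Set ι} {L : Submodule A N}
    (hf : ∀ b ∈ s, q • f (E b) ∈ L) {x : M} (hx : x ∈ qLattice A q E s) : f x ∈ L := by
  have hle : qLattice A q E s ≤ L.comap (f.restrictScalars A) := by
    refine Submodule.span_le.2 ?_
    rintro _ ⟨b, hb, rfl⟩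
    simpa using hf b hb
  exact hle hx

namespace HasLeadingTerm

protected theorem self : HasLeadingTerm A q r E (E a) a := by
  simp [HasLeadingTerm]

theorem sub (hX : HasLeadingTerm A q r E X a) {y : M} (hy : y ∈ qLattice A q E {b | r b a}) :
    HasLeadingTerm A q r E (X - y) a := by
  rw [HasLeadingTerm, sub_right_comm]
  exact Submodule.sub_mem _ hX hy

theorem smul_mem [IsTrans ι r] (hq : q ∈ A) (hX : HasLeadingTerm A q r E X b) (hba : r b a) :
    q • X ∈ qLattice A q E {d | r d a} := by
  have htail : q • (X - E b) ∈ qLattice A q E {d | r d a} :=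
    Submodule.smul_mem _ (⟨q, hq⟩ : A) (qLattice_mono hba hX)
  simpa [smul_sub] using Submodule.add_mem _ htail (smul_mem_qLattice (E := E) hba)

theorem pow_smul_mem [IsTrans ι r] (hq : q ∈ A) (hX : HasLeadingTerm A q r E X b) (hba : r b a)
    {k : ℕ} (hk : 0 < k) : q ^ k • X ∈ qLattice A q E {d | r d a} := by
  obtain ⟨j, rfl⟩ := Nat.exists_eq_succ_of_ne_zero hk.ne'
  rw [pow_succ, mul_smul]
  exact Submodule.smul_mem _ (⟨q ^ j, A.pow_mem hq j⟩ : A) (hX.smul_mem hq hba)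

theorem map (f : M →ₗ[K] N) {a' : ι'} (hX : HasLeadingTerm A q r E X a)
    (hlead : HasLeadingTerm A q r' E' (f (E a)) a')
    (htail : ∀ b, r b a → q • f (E b) ∈ qLattice A q E' {d | r' d a'}) :
    HasLeadingTerm A q r' E' (f X) a' := by
  have hsub := Submodule.add_mem _ (map_mem_of_mem_qLattice f htail hX) hlead
  rwa [map_sub, sub_add_sub_cancel] at hsub

theorem sub_mem_span (hX : HasLeadingTerm A q r E X a) :
    X - E a ∈ Submodule.span K (E '' {b | r b a}) :=
  map_mem_of_mem_qLattice (L := (Submodule.span K (E '' {b | r b a})).restrictScalars A)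
    LinearMap.id (fun b hb => Submodule.smul_mem _ q (Submodule.subset_span ⟨b, hb, rfl⟩)) hX

end HasLeadingTerm

theorem exists_mem_forall_not_rel [IsStrictOrder ι r] {t : Finset ι} (ht : t.Nonempty) :
    ∃ b ∈ t, ∀ d ∈ t, ¬ r b d := by
  let _ : PartialOrder ι := partialOrderOfSO r
  obtain ⟨b, hb⟩ := t.exists_maximal ht
  exact ⟨b, hb.prop, fun d hd hbd => hb.not_gt hd hbd⟩

theorem linearIndependent_of_unitriangular [IsStrictOrder ι r] (hE : LinearIndependent K E)
    (hB : ∀ a, B a - E a ∈ Submodule.span K (E '' {b | r b a})) : LinearIndependent K B := by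
  classical
  rw [linearIndependent_iff']
  intro s g hg
  by_contra! hne
  obtain ⟨i, hi, hgi⟩ := hne
  obtain ⟨b, hb, hmax⟩ := exists_mem_forall_not_rel (r := r) (t := s.filter (g · ≠ 0))
    ⟨i, Finset.mem_filter.2 ⟨hi, hgi⟩⟩
  obtain ⟨hbs, hgb⟩ := Finset.mem_filter.1 hb
  set W := Submodule.span K (E '' {b}ᶜ)
  have hE_mem : ∀ d, d ≠ b → E d ∈ W := fun d hd => Submodule.subset_span ⟨d, hd, rfl⟩
  have htail : ∀ d, ¬ r b d → B d - E d ∈ W := fun d hbd =>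
    Submodule.span_mono (Set.image_mono fun c (hc : r c d) (hcb : c = b) => hbd (hcb ▸ hc)) (hB d)
  have hrest : ∑ d ∈ s.erase b, g d • B d ∈ W := by
    refine Submodule.sum_mem _ fun d hd => ?_
    obtain ⟨hdb, hds⟩ := Finset.mem_erase.1 hd
    by_cases hgd : g d = 0
    · simp [hgd]
    · have hbd : ¬ r b d := hmax d (Finset.mem_filter.2 ⟨hds, hgd⟩)
      exact W.smul_mem _ (by simpa using W.add_mem (htail d hbd) (hE_mem d hdb))
  have hBb : B b ∈ W := by
    rw [← Finset.add_sum_erase s _ hbs, add_eq_zero_iff_eq_neg] at hg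
    exact (W.smul_mem_iff hgb).1 (hg ▸ W.neg_mem hrest)
  have hEb : E b ∈ W := by simpa using W.sub_mem hBb (htail b (irrefl b))
  exact hE.notMem_span_image (by simp) hEb

theorem qLattice_le_of_hasLeadingTerm [IsTrans ι r] [IsWellFounded ι r] (hq : q ∈ A)
    (hB : ∀ a, HasLeadingTerm A q r E (B a) a) (a : ι) :
    qLattice A q E {b | r b a} ≤ qLattice A q B {b | r b a} := by
  induction a using IsWellFounded.induction r with
  | _ a ih =>
    refine Submodule.span_le.2 ?_
    rintro _ ⟨b, hba : r b a, rfl⟩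
    have htail : B b - E b ∈ qLattice A q B {d | r d a} := qLattice_mono hba (ih b hba (hB b))
    have hsmul : q • (B b - E b) ∈ qLattice A q B {d | r d a} :=
      Submodule.smul_mem _ (⟨q, hq⟩ : A) htail
    have hlead : q • B b ∈ qLattice A q B {d | r d a} := smul_mem_qLattice hba
    simpa [smul_sub] using Submodule.sub_mem _ hlead hsmul

variable {bar : K →+* K} {σ : M →ₛₗ[bar] M} {ν : ι → K}

theorem bar_coeff_mul_eigenvalue (hB : LinearIndependent K B) (hσ : ∀ b, σ (B b) = ν b • B b)
    {c : ι →₀ K} {k : K}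
    (hc : σ (Finsupp.linearCombination K B c) = k • Finsupp.linearCombination K B c) (b : ι) :
    bar (c b) * ν b = k * c b := by
  have hsum : ∑ d ∈ c.support, (bar (c d) * ν d - k * c d) • B d = 0 := by
    simpa [Finsupp.linearCombination_apply, Finsupp.sum, map_sum, hσ, Finset.smul_sum, smul_smul,
      sub_smul, Finset.sum_sub_distrib, sub_eq_zero] using hc
  by_cases hb : b ∈ c.support
  · exact sub_eq_zero.1 (linearIndependent_iff'.1 hB _ _ hsum b hb)
  · simp [Finsupp.notMem_support_iff.1 hb]

theorem eq_of_hasLeadingTerm_of_eigenvector [IsStrictOrder ι r] [IsWellFounded ι r] (hq : q ∈ A)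
    (hbar : ∀ x ∈ A, bar (q * x) = q * x → q * x = 0) (hE : LinearIndependent K E)
    (hB : ∀ a, HasLeadingTerm A q r E (B a) a) (hσ : ∀ a, σ (B a) = ν a • B a)
    (hν : ∀ a b, r b a → ν b = ν a) (hν₀ : ∀ a, ν a ≠ 0)
    (hX : HasLeadingTerm A q r E X a) {k : K} (hσX : σ X = k • X) : B a = X := by
  classical
  have hmem : X - B a ∈ qLattice A q B {b | r b a} :=
    qLattice_le_of_hasLeadingTerm hq hB a (by simpa using Submodule.sub_mem _ hX (hB a))
  obtain ⟨l, hl, hlX⟩ := (Finsupp.mem_span_image_iff_linearCombination A).1 hmem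
  set m : ι →₀ K := l.mapRange (fun x : A => q * (x : K)) (by simp) with hm
  have hmX : Finsupp.linearCombination K B m = X - B a := by
    rw [← hlX, Finsupp.linearCombination_apply, Finsupp.linearCombination_apply,
      Finsupp.sum_mapRange_index (by simp)]
    exact Finsupp.sum_congr fun b _ => by rw [Subring.smul_def, smul_smul, mul_comm]
  have hX_eq : X = Finsupp.linearCombination K B (Finsupp.single a 1 + m) := by
    rw [map_add, hmX]; simp
  have hcoeff := bar_coeff_mul_eigenvalue
    (linearIndependent_of_unitriangular hE fun b => (hB b).sub_mem_span) hσ (hX_eq ▸ hσX)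
  have hl_zero : ∀ b, ¬ r b a → m b = 0 := fun b hb => by
    have : b ∉ l.support := fun h => hb (hl h)
    simp [hm, Finsupp.notMem_support_iff.1 this]
  have hk : ν a = k := by
    simpa [hl_zero a (irrefl a)] using hcoeff a
  have hm_zero : m = 0 := by
    ext b
    by_cases hba : r b a
    · have hne : a ≠ b := by rintro rfl; exact irrefl _ hba
      have hfix : bar (m b) = m b := by
        have := hcoeff b
        rw [hν a b hba, ← hk, mul_comm] at this
        simpa [hne, hν₀ a] using this
      exact hbar _ (l b).2 hfix
    · exact hl_zero b hba
  rw [hm_zero, map_zero, eq_comm, sub_eq_zero] at hmX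
  exact hmX.symm

end LusztigLemma

section QCommute

variable {K R : Type*} [Field K] [Ring R] [Algebra K R] {q : K} {m n : ℤ} {x y z : R}

/-- `x` and `y` commute up to a power of `q`: `x y = q ^ n y x`. -/
def QCommute (q : K) (n : ℤ) (x y : R) : Prop :=
  x * y = q ^ n • (y * x)

namespace QCommute

theorem congr (h : QCommute q m x y) (hmn : m = n) : QCommute q n x y :=
  hmn ▸ h

theorem eq_pow_smul {k : ℕ} (h : QCommute q k x y) : x * y = q ^ k • (y * x) := by
  simpa [QCommute] using h

theorem mul_mul_eq (h : QCommute q n x y) (t : R) : x * (y * t) = q ^ n • (y * (x * t)) := by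
  rw [← mul_assoc, h, smul_mul_assoc, mul_assoc]

theorem mul_right (hq : q ≠ 0) (hy : QCommute q m x y) (hz : QCommute q n x z) :
    QCommute q (m + n) x (y * z) := by
  rw [QCommute, hy.mul_mul_eq, hz, mul_smul_comm, smul_smul, zpow_add₀ hq, mul_assoc]

theorem smul_right (h : QCommute q n x y) (c : K) : QCommute q n x (c • y) := by
  rw [QCommute, mul_smul_comm, h, smul_mul_assoc, smul_comm]

theorem sub_right (hy : QCommute q n x y) (hz : QCommute q n x z) : QCommute q n x (y - z) := by
  rw [QCommute, mul_sub, sub_mul, hy, hz, smul_sub]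

theorem one_right : QCommute q 0 x 1 := by
  simp [QCommute]

theorem symm (hq : q ≠ 0) (h : QCommute q n x y) : QCommute q (-n) y x := by
  rw [QCommute, h, smul_smul, ← zpow_add₀ hq, neg_add_cancel, zpow_zero, one_smul]

theorem mul_left (hq : q ≠ 0) (hx : QCommute q m x z) (hy : QCommute q n y z) :
    QCommute q (m + n) (x * y) z := by
  simpa [add_comm] using ((hx.symm hq).mul_right hq (hy.symm hq)).symm hq

theorem smul_left (h : QCommute q n x y) (c : K) : QCommute q n (c • x) y := by
  rw [QCommute, smul_mul_assoc, h, mul_smul_comm, smul_comm]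

theorem pow_right (hq : q ≠ 0) (h : QCommute q n x y) (k : ℕ) : QCommute q (k * n) x (y ^ k) := by
  induction k with
  | zero => simpa using one_right
  | succ k ih => simpa [pow_succ, add_mul] using ih.mul_right hq h

theorem pow_left (hq : q ≠ 0) (h : QCommute q n x y) (k : ℕ) : QCommute q (k * n) (x ^ k) y := by
  simpa using ((h.symm hq).pow_right hq k).symm hq

end QCommute

theorem qCommute_op_iff :
    QCommute q n (MulOpposite.op y) (MulOpposite.op x) ↔ QCommute q n x y := by
  rw [QCommute, QCommute, ← MulOpposite.op_mul, ← MulOpposite.op_mul, ← MulOpposite.op_smul,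
    MulOpposite.op_inj]

theorem qCommute_zero_iff : QCommute q 0 x y ↔ Commute x y := by
  simp [QCommute, Commute, SemiconjBy]

end QCommute

section LucasU

variable {R : Type*} [Ring R]

/-- The Lucas (rescaled Chebyshev) sequence `0, 1, z, z² - c, …` with recursion
`L (n + 2) = z L (n + 1) - c L n`. -/
def lucasU (z c : R) : ℕ → R
  | 0 => 0
  | 1 => 1
  | n + 2 => z * lucasU z c (n + 1) - c * lucasU z c n

variable {K : Type*} [Field K] [Algebra K R] {q : K} {n : ℤ} {x z c : R}

@[simp] theorem lucasU_zero : lucasU z c 0 = 0 := rfl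

@[simp] theorem lucasU_one : lucasU z c 1 = 1 := rfl

theorem lucasU_add_two (k : ℕ) :
    lucasU z c (k + 2) = z * lucasU z c (k + 1) - c * lucasU z c k := rfl

theorem QCommute.lucasU_right (hq : q ≠ 0) (hz : QCommute q n x z) (hc : QCommute q (2 * n) x c)
    (k : ℕ) : QCommute q (n * (k - 1)) x (lucasU z c k) := by
  induction k using Nat.twoStepInduction with
  | zero => simp [QCommute]
  | one => simpa using QCommute.one_right
  | more k ih ih' =>
    rw [lucasU_add_two]
    refine .sub_right ?_ ?_
    · exact (hz.mul_right hq ih').congr (by push_cast; ring)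
    · exact (hc.mul_right hq ih).congr (by push_cast; ring)

theorem commute_lucasU (hz : Commute x z) (hc : Commute x c) (k : ℕ) :
    Commute x (lucasU z c k) := by
  induction k using Nat.twoStepInduction with
  | zero => simp
  | one => simp
  | more k ih ih' => exact (hz.mul_right ih').sub_right (hc.mul_right ih)

end LucasU

section BarAntiautomorphism

variable {K R : Type*} [Field K] [Ring R] [Algebra K R] {q : K} {bar : K →+* K}
  {σ : R →ₛₗ[bar] R} {i j k l m n : ℤ} {x y : R}

/-- `σ` is a ring antiautomorphism, semilinear over a field endomorphism with `q ↦ q⁻¹`. -/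
structure IsBarAntiautomorphism (q : K) (σ : R →ₛₗ[bar] R) : Prop where
  ne_zero : q ≠ 0
  bar_q : bar q = q⁻¹
  map_one : σ 1 = 1
  map_mul : ∀ x y, σ (x * y) = σ y * σ x

/-- `x` is an eigenvector of `σ` with eigenvalue `q ^ n`. -/
def HasBarWeight (q : K) (σ : R →ₛₗ[bar] R) (n : ℤ) (x : R) : Prop :=
  σ x = q ^ n • x

namespace IsBarAntiautomorphism

variable (hσ : IsBarAntiautomorphism q σ)
include hσ

theorem bar_zpow (k : ℤ) : bar (q ^ k) = q ^ (-k) := by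
  rw [map_zpow₀, hσ.bar_q, inv_zpow, zpow_neg]

theorem map_mul_of_weights (hx : HasBarWeight q σ i x) (hy : HasBarWeight q σ j y) :
    σ (x * y) = q ^ (i + j) • (y * x) := by
  rw [hσ.map_mul, hx, hy, smul_mul_smul_comm, zpow_add₀ hσ.ne_zero, mul_comm]

theorem map_zpow_smul_mul (hx : HasBarWeight q σ i x) (hy : HasBarWeight q σ j y) (k : ℤ) :
    σ (q ^ k • (x * y)) = q ^ (i + j - k) • (y * x) := by
  rw [map_smulₛₗ, hσ.bar_zpow, hσ.map_mul_of_weights hx hy, smul_smul, ← zpow_add₀ hσ.ne_zero,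
    neg_add_eq_sub]

theorem qCommute_of_weights (hx : HasBarWeight q σ i x) (hy : HasBarWeight q σ j y)
    (hyx : HasBarWeight q σ n (y * x)) : QCommute q (n - i - j) x y := by
  have h : q ^ (i + j) • (x * y) = q ^ n • (y * x) := by
    rw [← hyx, hσ.map_mul_of_weights hy hx, add_comm]
  rw [QCommute, sub_sub, zpow_sub₀ hσ.ne_zero, div_eq_inv_mul, mul_smul, ← h,
    inv_smul_smul₀ (zpow_ne_zero _ hσ.ne_zero)]

theorem zpow_smul_mul_sub_eq_flip {w x' y' : R} {i' j' k' l' : ℤ} (hw : HasBarWeight q σ n w)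
    (hx : HasBarWeight q σ i x) (hy : HasBarWeight q σ j y) (hx' : HasBarWeight q σ i' x')
    (hy' : HasBarWeight q σ j' y') (h : w = q ^ k • (x * y) - q ^ l • (x' * y'))
    (hk : i + j = k + k' + n) (hl : i' + j' = l + l' + n) :
    w = q ^ k' • (y * x) - q ^ l' • (y' * x') := by
  rw [← (zpow_ne_zero n hσ.ne_zero).isUnit.smul_left_cancel, ← hw, h, map_sub,
    hσ.map_zpow_smul_mul hx hy, hσ.map_zpow_smul_mul hx' hy', hk, hl, smul_sub, smul_smul,
    smul_smul, ← zpow_add₀ hσ.ne_zero, ← zpow_add₀ hσ.ne_zero]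
  congr 3 <;> ring

end IsBarAntiautomorphism

namespace HasBarWeight

theorem congr (hx : HasBarWeight q σ m x) (hmn : m = n) : HasBarWeight q σ n x :=
  hmn ▸ hx

theorem sub (hx : HasBarWeight q σ n x) (hy : HasBarWeight q σ n y) :
    HasBarWeight q σ n (x - y) := by
  rw [HasBarWeight, map_sub, hx, hy, smul_sub]

theorem pow_smul (hσ : IsBarAntiautomorphism q σ) (hx : HasBarWeight q σ n x) (k : ℕ) :
    HasBarWeight q σ (n - 2 * k) (q ^ k • x) := by
  rw [HasBarWeight, ← zpow_natCast, map_smulₛₗ, hσ.bar_zpow, hx, smul_smul, smul_smul,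
    ← zpow_add₀ hσ.ne_zero, ← zpow_add₀ hσ.ne_zero]
  congr 2; ring

theorem mul (hσ : IsBarAntiautomorphism q σ) (hx : HasBarWeight q σ m x)
    (hy : HasBarWeight q σ n y) (hyx : QCommute q k y x) :
    HasBarWeight q σ (m + n + k) (x * y) := by
  rw [HasBarWeight, hσ.map_mul_of_weights hx hy, hyx, smul_smul, ← zpow_add₀ hσ.ne_zero]

theorem lucasU (hσ : IsBarAntiautomorphism q σ) {z c : R} (hz : HasBarWeight q σ n z)
    (hc : HasBarWeight q σ (2 * n) c) (hzc : Commute z c) (k : ℕ) :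
    HasBarWeight q σ (n * (k - 1)) (lucasU z c k) := by
  induction k using Nat.twoStepInduction with
  | zero => simp [HasBarWeight]
  | one => simpa [HasBarWeight] using hσ.map_one
  | more k ih ih' =>
    rw [lucasU_add_two]
    refine .sub ?_ ?_
    · have hcomm := qCommute_zero_iff (q := q).2 (commute_lucasU (.refl z) hzc (k + 1)).symm
      exact (hz.mul hσ ih' hcomm).congr (by push_cast; ring)
    · have hcomm := qCommute_zero_iff (q := q).2 (commute_lucasU hzc.symm (.refl c) k).symm
      exact (hc.mul hσ ih hcomm).congr (by push_cast; ring)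

end HasBarWeight

/-- The antiautomorphism of `Rᵐᵒᵖ` induced by `σ`. -/
def opBar (σ : R →ₛₗ[bar] R) : Rᵐᵒᵖ →ₛₗ[bar] Rᵐᵒᵖ :=
  ((MulOpposite.opLinearEquiv K).toLinearMap.comp σ).comp
    (MulOpposite.opLinearEquiv K).symm.toLinearMap

theorem opBar_apply (x : Rᵐᵒᵖ) : opBar σ x = MulOpposite.op (σ x.unop) := rfl

theorem IsBarAntiautomorphism.op (hσ : IsBarAntiautomorphism q σ) :
    IsBarAntiautomorphism q (opBar σ) where
  ne_zero := hσ.ne_zero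
  bar_q := hσ.bar_q
  map_one := by simp [opBar_apply, hσ.map_one]
  map_mul x y := by simp [opBar_apply, hσ.map_mul]

theorem hasBarWeight_op_iff :
    HasBarWeight q (opBar σ) n (MulOpposite.op x) ↔ HasBarWeight q σ n x := by
  rw [HasBarWeight, HasBarWeight, opBar_apply, ← MulOpposite.op_smul, MulOpposite.op_inj,
    MulOpposite.unop_op]

end BarAntiautomorphism

section StraighteningRel

open MulOpposite

/-- The generators read backwards in the opposite algebra: the symmetry `uᵢ ↔ u₃₋ᵢ`. -/
def opRev {R : Type*} (u : Fin 4 → R) (i : Fin 4) : Rᵐᵒᵖ :=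
  op (u i.rev)

@[simp] theorem opRev_zero {R : Type*} (u : Fin 4 → R) : opRev u 0 = op (u 3) := rfl

@[simp] theorem opRev_one {R : Type*} (u : Fin 4 → R) : opRev u 1 = op (u 2) := rfl

@[simp] theorem opRev_two {R : Type*} (u : Fin 4 → R) : opRev u 2 = op (u 1) := rfl

@[simp] theorem opRev_three {R : Type*} (u : Fin 4 → R) : opRev u 3 = op (u 0) := rfl

variable {K R R' : Type*} [Field K] [Ring R] [Algebra K R] [Ring R'] [Algebra K R'] {q : K}
  {u : Fin 4 → R}

/-- The quadratic relations that rewrite words in `u 0, u 1, u 2, u 3` into PBW order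
(decreasing indices). -/
structure StraighteningRel (q : K) (u : Fin 4 → R) : Prop where
  ne_zero : q ≠ 0
  u0_u1 : QCommute q (-2) (u 0) (u 1)
  u1_u2 : QCommute q (-2) (u 1) (u 2)
  u2_u3 : QCommute q (-2) (u 2) (u 3)
  u0_u2 : u 0 * u 2 = q ^ (-2 : ℤ) • (u 2 * u 0) - (1 - q ^ (-2 : ℤ)) • (u 1 * u 1)
  u1_u3 : u 1 * u 3 = q ^ (-2 : ℤ) • (u 3 * u 1) - (1 - q ^ (-2 : ℤ)) • (u 2 * u 2)
  u0_u3 : u 0 * u 3 = q ^ (-2 : ℤ) • (u 3 * u 0) - (1 - q ^ (-4 : ℤ)) • (u 2 * u 1)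

namespace StraighteningRel

theorem reverse (h : StraighteningRel q u) : StraighteningRel q (opRev u) where
  ne_zero := h.ne_zero
  u0_u1 := qCommute_op_iff.2 h.u2_u3
  u1_u2 := qCommute_op_iff.2 h.u1_u2
  u2_u3 := qCommute_op_iff.2 h.u0_u1
  u0_u2 := by simpa using congrArg op h.u1_u3
  u1_u3 := by simpa using congrArg op h.u0_u2
  u0_u3 := by simpa using congrArg op h.u0_u3

theorem of_injective (f : R →ₐ[K] R') (hf : Function.Injective f)
    (h : StraighteningRel q (f ∘ u)) : StraighteningRel q u where
  ne_zero := h.ne_zero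
  u0_u1 := hf (by simpa [QCommute] using h.u0_u1)
  u1_u2 := hf (by simpa [QCommute] using h.u1_u2)
  u2_u3 := hf (by simpa [QCommute] using h.u2_u3)
  u0_u2 := hf (by simpa using h.u0_u2)
  u1_u3 := hf (by simpa using h.u1_u3)
  u0_u3 := hf (by simpa using h.u0_u3)

-- Applying `D` to a relation gives the next ones: `u₀u₁` yields `u₀u₂`, which yields `u₀u₃`.
theorem of_derivation (hq : q ≠ 0) (D : R →ₗ[K] R) (hD : ∀ x y, D (x * y) = D x * y + x * D y)
    {t : K} (ht : t ≠ 0) (h0 : D (u 0) = t • u 1) (h1 : D (u 1) = t • u 2)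
    (h2 : D (u 2) = t • u 3) (h01 : QCommute q (-2) (u 0) (u 1))
    (h12 : QCommute q (-2) (u 1) (u 2)) (h23 : QCommute q (-2) (u 2) (u 3)) :
    StraighteningRel q u := by
  have cancel : ∀ {x y : R}, t • x = t • y → x = y := fun h => smul_right_injective R ht h
  have h02 : u 0 * u 2 = q ^ (-2 : ℤ) • (u 2 * u 0) - (1 - q ^ (-2 : ℤ)) • (u 1 * u 1) := by
    have hD01 := congrArg D h01
    simp only [map_smul, hD, h0, h1, smul_mul_assoc, mul_smul_comm] at hD01
    exact cancel (by linear_combination (norm := module) hD01)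
  have h13 : u 1 * u 3 = q ^ (-2 : ℤ) • (u 3 * u 1) - (1 - q ^ (-2 : ℤ)) • (u 2 * u 2) := by
    have hD12 := congrArg D h12
    simp only [map_smul, hD, h1, h2, smul_mul_assoc, mul_smul_comm] at hD12
    exact cancel (by linear_combination (norm := module) hD12)
  refine ⟨hq, h01, h12, h23, h02, h13, cancel ?_⟩
  have hD02 := congrArg D h02
  simp only [map_smul, map_sub, hD, h0, h1, h2, smul_mul_assoc, mul_smul_comm] at hD02
  have hq4 : q ^ (-4 : ℤ) = q ^ (-2 : ℤ) * q ^ (-2 : ℤ) := by rw [← zpow_add₀ hq]; rfl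
  rw [hq4]
  linear_combination (norm := module)
    hD02 - (2 - q ^ (-2 : ℤ)) • congrArg (t • ·) h12

end StraighteningRel

end StraighteningRel

section QuantumMinors

open MulOpposite

variable {K R : Type*} [Field K] [Ring R] [Algebra K R] {q : K} {u : Fin 4 → R}

/-- The quantum `2 × 2` minor `uᵢ uⱼ - q² uₖ uₗ`. -/
def qMinor (q : K) (u : Fin 4 → R) (i j k l : Fin 4) : R :=
  u i * u j - q ^ 2 • (u k * u l)

/-- The element `p₀ = u₂ u₀ - q² u₁²`. -/
def minor20 (q : K) (u : Fin 4 → R) : R :=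
  qMinor q u 2 0 1 1

/-- The element `p₁ = u₃ u₁ - q² u₂²`. -/
def minor31 (q : K) (u : Fin 4 → R) : R :=
  qMinor q u 3 1 2 2

/-- The element `z = u₃ u₀ - q² u₂ u₁`, which turns out to be `B[1,0,0,1]`. -/
def minor30 (q : K) (u : Fin 4 → R) : R :=
  qMinor q u 3 0 2 1

/-- The element `c = q² p₀ p₁`, the constant of the three-term recursion for `B[n,0,0,n]`. -/
def minorProd (q : K) (u : Fin 4 → R) : R :=
  q ^ 2 • (minor20 q u * minor31 q u)

theorem minor20_opRev : minor20 q (opRev u) = op (minor31 q u) := by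
  simp [minor20, minor31, qMinor]

theorem minor31_opRev : minor31 q (opRev u) = op (minor20 q u) := by
  simp [minor20, minor31, qMinor]

theorem QCommute.qMinor_right (hq : q ≠ 0) {s t : ℤ} {x : R}
    (hx : ∀ i : Fin 4, QCommute q (s - t * (i : ℕ)) x (u i)) {i j k l : Fin 4}
    (hijkl : (i + j : ℕ) = k + l) :
    QCommute q (2 * s - t * (i + j : ℕ)) x (qMinor q u i j k l) := by
  refine .sub_right ?_ (.smul_right ?_ _)
  · exact ((hx i).mul_right hq (hx j)).congr (by push_cast; ring)
  · exact ((hx k).mul_right hq (hx l)).congr (by rw [hijkl]; push_cast; ring)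

namespace StraighteningRel

variable (h : StraighteningRel q u)
include h

-- The second half makes the relations usable as simp lemmas on right-associated words.
theorem straighten :
    (u 0 * u 1 = q ^ (-2 : ℤ) • (u 1 * u 0) ∧ u 1 * u 2 = q ^ (-2 : ℤ) • (u 2 * u 1) ∧
      u 2 * u 3 = q ^ (-2 : ℤ) • (u 3 * u 2) ∧
      u 0 * u 2 = q ^ (-2 : ℤ) • (u 2 * u 0) - (1 - q ^ (-2 : ℤ)) • (u 1 * u 1) ∧
      u 1 * u 3 = q ^ (-2 : ℤ) • (u 3 * u 1) - (1 - q ^ (-2 : ℤ)) • (u 2 * u 2) ∧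
      u 0 * u 3 = q ^ (-2 : ℤ) • (u 3 * u 0) - (1 - q ^ (-4 : ℤ)) • (u 2 * u 1)) ∧
    ∀ x, u 0 * (u 1 * x) = q ^ (-2 : ℤ) • (u 1 * (u 0 * x)) ∧
      u 1 * (u 2 * x) = q ^ (-2 : ℤ) • (u 2 * (u 1 * x)) ∧
      u 2 * (u 3 * x) = q ^ (-2 : ℤ) • (u 3 * (u 2 * x)) ∧
      u 0 * (u 2 * x) =
        q ^ (-2 : ℤ) • (u 2 * (u 0 * x)) - (1 - q ^ (-2 : ℤ)) • (u 1 * (u 1 * x)) ∧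
      u 1 * (u 3 * x) =
        q ^ (-2 : ℤ) • (u 3 * (u 1 * x)) - (1 - q ^ (-2 : ℤ)) • (u 2 * (u 2 * x)) ∧
      u 0 * (u 3 * x) =
        q ^ (-2 : ℤ) • (u 3 * (u 0 * x)) - (1 - q ^ (-4 : ℤ)) • (u 2 * (u 1 * x)) := by
  refine ⟨⟨h.u0_u1, h.u1_u2, h.u2_u3, h.u0_u2, h.u1_u3, h.u0_u3⟩, fun x => ⟨h.u0_u1.mul_mul_eq x,
    h.u1_u2.mul_mul_eq x, h.u2_u3.mul_mul_eq x, ?_, ?_, ?_⟩⟩ <;>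
  simp only [← mul_assoc, h.u0_u2, h.u1_u3, h.u0_u3, sub_mul, smul_mul_assoc]

theorem minor20_qCommute (i : Fin 4) : QCommute q (2 - 2 * (i : ℕ)) (minor20 q u) (u i) := by
  have hq := h.ne_zero
  match i with
  | 0 | 1 | 2 | 3 =>
    simp only [QCommute, minor20, qMinor, sub_mul, mul_sub, smul_mul_assoc, mul_smul_comm,
      mul_assoc, h.straighten, smul_sub]
    match_scalars <;> simp <;> field_simp <;> ring

theorem minor31_qCommute (i : Fin 4) : QCommute q (4 - 2 * (i : ℕ)) (minor31 q u) (u i) := by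
  have hop := h.reverse.minor20_qCommute i.rev
  rw [minor20_opRev, opRev, Fin.rev_rev, qCommute_op_iff] at hop
  exact (hop.symm h.ne_zero).congr (by rw [Fin.val_rev]; omega)

theorem minor31_minor20 : QCommute q 4 (minor31 q u) (minor20 q u) :=
  QCommute.qMinor_right (i := 2) (j := 0) h.ne_zero h.minor31_qCommute rfl

theorem minor20_minor30 : QCommute q (-2) (minor20 q u) (minor30 q u) :=
  QCommute.qMinor_right (i := 3) (j := 0) h.ne_zero h.minor20_qCommute rfl

theorem minor31_minor30 : QCommute q 2 (minor31 q u) (minor30 q u) :=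
  QCommute.qMinor_right (i := 3) (j := 0) h.ne_zero h.minor31_qCommute rfl

theorem minor30_minorProd : Commute (minor30 q u) (minorProd q u) := by
  have hprod : QCommute q 0 (minorProd q u) (minor30 q u) :=
    (h.minor20_minor30.mul_left h.ne_zero h.minor31_minor30).smul_left _
  exact (qCommute_zero_iff.1 hprod).symm

theorem minorProd_qCommute (i : Fin 4) : QCommute q (6 - 4 * (i : ℕ)) (minorProd q u) (u i) :=
  (((h.minor20_qCommute i).mul_left h.ne_zero (h.minor31_qCommute i)).smul_left _).congr (by ring)

theorem u3_mul_minor30 : u 3 * minor30 q u =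
    q ^ 2 • (minor30 q u * u 3) + (q ^ 2 - 1) • (u 2 * minor31 q u) := by
  have hq := h.ne_zero
  simp only [minor30, minor31, qMinor, sub_mul, mul_sub, smul_mul_assoc, mul_smul_comm, mul_assoc,
    h.straighten, smul_sub]
  match_scalars <;> field_simp <;> ring

theorem u2_mul_minor30 : u 2 * minor30 q u =
    q ^ 2 • (minor30 q u * u 2) - (q ^ 4 - q ^ 2) • (minor20 q u * u 3) := by
  have hq := h.ne_zero
  simp only [minor30, minor20, qMinor, sub_mul, mul_sub, smul_mul_assoc, mul_smul_comm, mul_assoc,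
    h.straighten, smul_sub]
  match_scalars <;> field_simp <;> ring

theorem minorProd_eq : minorProd q u = u 3 * (minor20 q u * u 1)
    + q ^ (-2 : ℤ) • (u 2 * (minor31 q u * u 0)) - q ^ 2 • (minor30 q u * (u 2 * u 1)) := by
  have hq := h.ne_zero
  simp only [minorProd, minor30, minor20, minor31, qMinor, sub_mul, mul_sub, smul_mul_assoc,
    mul_smul_comm, mul_assoc, h.straighten, smul_sub]
  match_scalars <;> field_simp <;> ring

end StraighteningRel

end QuantumMinors

section LucasFamilies

variable {K R : Type*} [Field K] [Ring R] [Algebra K R] {q : K} {u : Fin 4 → R}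

/-- The Lucas sequence in `z` and `c`; up to a power of `q`, the element of index `n + 1` is
`B[n,0,0,n]`. -/
def minorLucas (q : K) (u : Fin 4 → R) : ℕ → R :=
  lucasU (minor30 q u) (minorProd q u)

/-- Up to a power of `q`, the element `B[n+1,0,0,n]`. -/
def cornerLucas (q : K) (u : Fin 4 → R) (n : ℕ) : R :=
  minorLucas q u (n + 1) * u 3 - q ^ (-2 : ℤ) • (minorLucas q u n * (u 2 * minor31 q u))

theorem minorLucas_one : minorLucas q u 1 = 1 := rfl

theorem minorLucas_two : minorLucas q u 2 = minor30 q u := by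
  simp [minorLucas, lucasU]

theorem minorLucas_add_two (n : ℕ) : minorLucas q u (n + 2) =
    minor30 q u * minorLucas q u (n + 1) - minorProd q u * minorLucas q u n := rfl

namespace StraighteningRel

variable (h : StraighteningRel q u)
include h

theorem minor30_minorLucas (n : ℕ) : Commute (minor30 q u) (minorLucas q u n) :=
  commute_lucasU (.refl _) h.minor30_minorProd n

theorem minorProd_minorLucas (n : ℕ) : Commute (minorProd q u) (minorLucas q u n) :=
  commute_lucasU h.minor30_minorProd.symm (.refl _) n

theorem minorLucas_mul_minor30 (n : ℕ) : minorLucas q u (n + 1) * minor30 q u =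
    minorLucas q u (n + 2) + minorProd q u * minorLucas q u n := by
  rw [← (h.minor30_minorLucas (n + 1)).eq, minorLucas_add_two, sub_add_cancel]

theorem minorLucas_add_two_right (n : ℕ) : minorLucas q u (n + 2) =
    minorLucas q u (n + 1) * minor30 q u - minorLucas q u n * minorProd q u := by
  rw [h.minorLucas_mul_minor30, (h.minorProd_minorLucas n).eq, add_sub_cancel_right]

theorem minorProd_u2_minor31 : QCommute q (-6) (minorProd q u) (u 2 * minor31 q u) := by
  have h31 : QCommute q 0 (minor31 q u) (minor31 q u) := qCommute_zero_iff.2 (.refl _)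
  have hprod : QCommute q (-4) (minorProd q u) (minor31 q u) :=
    ((h.minor31_minor20.symm h.ne_zero).mul_left h.ne_zero h31).smul_left _
  exact (h.minorProd_qCommute 2).mul_right h.ne_zero hprod

theorem u2_minor31_mul_minor30 : u 2 * minor31 q u * minor30 q u =
    q ^ 4 • (minor30 q u * (u 2 * minor31 q u))
      - (q ^ 6 - q ^ 4) • (minorProd q u * u 3) := by
  have h30 : minor31 q u * minor30 q u = q ^ 2 • (minor30 q u * minor31 q u) :=
    h.minor31_minor30.eq_pow_smul
  have hu3 : u 3 * minor31 q u = q ^ 2 • (minor31 q u * u 3) :=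
    QCommute.eq_pow_smul ((h.minor31_qCommute 3).symm h.ne_zero)
  rw [mul_assoc, h30, mul_smul_comm, ← mul_assoc, h.u2_mul_minor30, minorProd]
  simp only [sub_mul, smul_mul_assoc, mul_assoc, hu3, mul_smul_comm, smul_sub]
  match_scalars <;> ring

theorem cornerLucas_mul_minor30 (n : ℕ) : cornerLucas q u (n + 1) * minor30 q u =
    q ^ 2 • cornerLucas q u (n + 2) + q ^ 4 • (minorProd q u * cornerLucas q u n) := by
  have hq := h.ne_zero
  simp only [cornerLucas, sub_mul, smul_mul_assoc, mul_assoc (minorLucas q u _), h.u3_mul_minor30,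
    h.u2_minor31_mul_minor30, mul_add, mul_sub, mul_smul_comm]
  simp only [← mul_assoc (minorLucas q u _) (minor30 q u), h.minorLucas_mul_minor30,
    ← mul_assoc (minorLucas q u _) (minorProd q u), ← (h.minorProd_minorLucas _).eq, add_mul,
    mul_assoc (minorProd q u)]
  match_scalars <;> field_simp <;> ring

theorem minorProd_cornerLucas (n : ℕ) :
    QCommute q (-6) (minorProd q u) (cornerLucas q u n) := by
  have hlucas : ∀ k, QCommute q 0 (minorProd q u) (minorLucas q u k) := fun k =>
    qCommute_zero_iff.2 (h.minorProd_minorLucas k)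
  exact ((hlucas _).mul_right h.ne_zero (h.minorProd_qCommute 3)).sub_right
    (((hlucas _).mul_right h.ne_zero h.minorProd_u2_minor31).smul_right _)

-- Both sides satisfy the recursion `y (n + 2) = y (n + 1) z - y n c`.
theorem u3_mul_minorLucas_sub (n : ℕ) :
    u 3 * minorLucas q u (n + 1) - q ^ 2 • (u 2 * minor31 q u * minorLucas q u n) =
      q ^ (2 * n) • cornerLucas q u n := by
  have hq := h.ne_zero
  induction n using Nat.twoStepInduction with
  | zero => simp [cornerLucas, minorLucas]
  | one =>
    simp only [cornerLucas, Nat.reduceAdd, minorLucas_one, minorLucas_two, mul_one, one_mul,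
      h.u3_mul_minor30]
    match_scalars <;> field_simp
    ring
  | more n ih ih' =>
    calc _ = (u 3 * minorLucas q u (n + 2)
              - q ^ 2 • (u 2 * minor31 q u * minorLucas q u (n + 1))) * minor30 q u
            - (u 3 * minorLucas q u (n + 1)
              - q ^ 2 • (u 2 * minor31 q u * minorLucas q u n)) * minorProd q u := by
          rw [h.minorLucas_add_two_right (n + 1), h.minorLucas_add_two_right n]
          simp only [mul_sub, sub_mul, smul_mul_assoc, mul_assoc]
          module
      _ = _ := by
          have hC : cornerLucas q u n * minorProd q u =
              q ^ 6 • (minorProd q u * cornerLucas q u n) :=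
            QCommute.eq_pow_smul ((h.minorProd_cornerLucas n).symm hq)
          rw [ih, ih', smul_mul_assoc, smul_mul_assoc, h.cornerLucas_mul_minor30, hC]
          match_scalars <;> ring

theorem u2_minor31_minor20 :
    u 2 * minor31 q u * minor20 q u = q ^ 4 • (minorProd q u * u 2) := by
  have hu2 : u 2 * minorProd q u = q ^ 2 • (minorProd q u * u 2) :=
    QCommute.eq_pow_smul ((h.minorProd_qCommute 2).symm h.ne_zero)
  have hminors : minor31 q u * minor20 q u = q ^ 4 • (minor20 q u * minor31 q u) :=
    h.minor31_minor20.eq_pow_smul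
  calc u 2 * minor31 q u * minor20 q u = q ^ 2 • (u 2 * minorProd q u) := by
        rw [mul_assoc, hminors, minorProd, mul_smul_comm, mul_smul_comm, smul_smul, ← pow_add]
    _ = q ^ 4 • (minorProd q u * u 2) := by rw [hu2, smul_smul, ← pow_add]

theorem minorLucas_add_three (n : ℕ) : minorLucas q u (n + 3) =
    cornerLucas q u (n + 1) * u 0 - cornerLucas q u n * minor20 q u * u 1 := by
  have hq := h.ne_zero
  set L := minorLucas q u
  set z := minor30 q u with hz
  set c := minorProd q u
  have hrec : ∀ k, L (k + 2) = L (k + 1) * z - L k * c := h.minorLucas_add_two_right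
  have hlead : L (n + 2) * u 3 * u 0 =
      L (n + 3) + L (n + 1) * c + q ^ 2 • (L (n + 2) * (u 2 * u 1)) := by
    rw [hrec (n + 1), hz, minor30, qMinor]
    simp only [mul_sub, mul_smul_comm, mul_assoc]
    abel
  have hmid : L (n + 2) * (u 2 * u 1) =
      L (n + 1) * (z * (u 2 * u 1)) - L n * (c * (u 2 * u 1)) := by
    rw [hrec n, sub_mul, mul_assoc, mul_assoc]
  have hc_eq := congrArg (L (n + 1) * ·) h.minorProd_eq
  have hv := congrArg (L n * · * u 1) h.u2_minor31_minor20
  simp only [cornerLucas, sub_mul, smul_mul_assoc, mul_add, mul_sub, mul_smul_comm, mul_assoc]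
    at hlead hmid hc_eq hv ⊢
  linear_combination (norm := skip) -hlead - q ^ 2 • hmid - hc_eq - q ^ (-2 : ℤ) • hv
  match_scalars <;> field_simp <;> ring

end StraighteningRel

end LucasFamilies

section BarWeights

variable {K R : Type*} [Field K] [Ring R] [Algebra K R] {q : K} {u : Fin 4 → R} {bar : K →+* K}
  {σ : R →ₛₗ[bar] R} {s t : ℤ}

theorem hasBarWeight_qMinor (hσ : IsBarAntiautomorphism q σ)
    (hu : ∀ i : Fin 4, HasBarWeight q σ (s + t * (i : ℕ)) (u i)) {i j k l : Fin 4}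
    (hrev : u j * u i - q ^ (-2 : ℤ) • (u l * u k) = q ^ (-2 : ℤ) • qMinor q u i j k l)
    (hijkl : (i + j : ℕ) = k + l) :
    HasBarWeight q σ (2 * s + t * (i + j : ℕ) - 2) (qMinor q u i j k l) := by
  have hij : s + t * (i : ℕ) + (s + t * (j : ℕ)) = 2 * s + t * (i + j : ℕ) := by push_cast; ring
  have hkl : s + t * (k : ℕ) + (s + t * (l : ℕ)) = 2 * s + t * (i + j : ℕ) := by
    rw [hijkl]; push_cast; ring
  have hscalar : bar (q ^ 2) = q ^ (-2 : ℤ) := by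
    simpa using hσ.bar_zpow 2
  rw [HasBarWeight]
  nth_rw 1 [qMinor]
  rw [map_sub, map_smulₛₗ, hscalar, hσ.map_mul_of_weights (hu i) (hu j),
    hσ.map_mul_of_weights (hu k) (hu l), hij, hkl, smul_comm, ← smul_sub, hrev, smul_smul,
    ← zpow_add₀ hσ.ne_zero]
  rfl

namespace StraighteningRel

variable (h : StraighteningRel q u)

include h in
theorem minor20_cornerLucas (n : ℕ) :
    QCommute q (-(2 * n + 4)) (minor20 q u) (cornerLucas q u n) := by
  have hq := h.ne_zero
  have hu2 : QCommute q (-2) (minor20 q u) (u 2) := h.minor20_qCommute 2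
  have hu3 : QCommute q (-4) (minor20 q u) (u 3) := h.minor20_qCommute 3
  have h31 : QCommute q (-4) (minor20 q u) (minor31 q u) := h.minor31_minor20.symm hq
  have hprod : QCommute q (2 * -2) (minor20 q u) (minorProd q u) :=
    ((qCommute_zero_iff.2 (.refl _)).mul_right hq h31).smul_right _
  have hlucas := h.minor20_minor30.lucasU_right hq hprod
  refine .sub_right ?_ (.smul_right ?_ _)
  · exact ((hlucas (n + 1)).mul_right hq hu3).congr (by push_cast; ring)
  · exact ((hlucas n).mul_right hq (hu2.mul_right hq h31)).congr (by ring)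

variable (hσ : IsBarAntiautomorphism q σ)
  (hu : ∀ i : Fin 4, HasBarWeight q σ (s + t * (i : ℕ)) (u i))
include h hσ hu

theorem hasBarWeight_minor20 : HasBarWeight q σ (2 * s + 2 * t - 2) (minor20 q u) := by
  have hrev : u 0 * u 2 - q ^ (-2 : ℤ) • (u 1 * u 1) = q ^ (-2 : ℤ) • qMinor q u 2 0 1 1 := by
    have hq := h.ne_zero
    rw [h.u0_u2, qMinor]
    match_scalars <;> field_simp
    ring
  exact (hasBarWeight_qMinor (i := 2) (j := 0) hσ hu hrev rfl).congr (by simp [mul_comm t])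

theorem hasBarWeight_minor31 : HasBarWeight q σ (2 * s + 4 * t - 2) (minor31 q u) := by
  have hrev : u 1 * u 3 - q ^ (-2 : ℤ) • (u 2 * u 2) = q ^ (-2 : ℤ) • qMinor q u 3 1 2 2 := by
    have hq := h.ne_zero
    rw [h.u1_u3, qMinor]
    match_scalars <;> field_simp
    ring
  exact (hasBarWeight_qMinor (i := 3) (j := 1) hσ hu hrev rfl).congr (by simp [mul_comm t])

theorem hasBarWeight_minor30 : HasBarWeight q σ (2 * s + 3 * t - 2) (minor30 q u) := by
  have hrev : u 0 * u 3 - q ^ (-2 : ℤ) • (u 1 * u 2) = q ^ (-2 : ℤ) • qMinor q u 3 0 2 1 := by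
    have hq := h.ne_zero
    rw [h.u0_u3, h.u1_u2, qMinor]
    match_scalars <;> field_simp
    ring
  exact (hasBarWeight_qMinor (i := 3) (j := 0) hσ hu hrev rfl).congr (by simp [mul_comm t])

theorem hasBarWeight_minorProd :
    HasBarWeight q σ (2 * (2 * s + 3 * t - 2)) (minorProd q u) := by
  have hmul := (h.hasBarWeight_minor20 hσ hu).mul hσ (h.hasBarWeight_minor31 hσ hu)
    h.minor31_minor20
  exact (hmul.pow_smul hσ 2).congr (by push_cast; ring)

theorem hasBarWeight_minorLucas (n : ℕ) :
    HasBarWeight q σ ((2 * s + 3 * t - 2) * (n - 1)) (minorLucas q u n) :=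
  (h.hasBarWeight_minor30 hσ hu).lucasU hσ (h.hasBarWeight_minorProd hσ hu) h.minor30_minorProd n

theorem hasBarWeight_u2_minor31 :
    HasBarWeight q σ (3 * s + 6 * t - 2) (u 2 * minor31 q u) := by
  have hu2 : HasBarWeight q σ (s + t * 2) (u 2) := hu 2
  have h31 : QCommute q 0 (minor31 q u) (u 2) := h.minor31_qCommute 2
  exact (hu2.mul hσ (h.hasBarWeight_minor31 hσ hu) h31).congr (by ring)

theorem hasBarWeight_cornerLucas (n : ℕ) :
    HasBarWeight q σ (s + 3 * t + (2 * s + 3 * t) * n) (cornerLucas q u n) := by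
  have hu3 : HasBarWeight q σ (s + t * 3) (u 3) := hu 3
  rw [HasBarWeight]
  nth_rw 1 [cornerLucas]
  rw [map_sub, hσ.map_mul_of_weights (h.hasBarWeight_minorLucas hσ hu (n + 1)) hu3,
    hσ.map_zpow_smul_mul (h.hasBarWeight_minorLucas hσ hu n) (h.hasBarWeight_u2_minor31 hσ hu)]
  set e := s + 3 * t + (2 * s + 3 * t - 2) * n
  have hlead : (2 * s + 3 * t - 2) * ((n + 1 : ℕ) - 1) + (s + t * 3) = e := by
    push_cast; ring
  have htail : (2 * s + 3 * t - 2) * (n - 1) + (3 * s + 6 * t - 2) - -2 = e + (2 : ℕ) := by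
    push_cast; ring
  have hend : s + 3 * t + (2 * s + 3 * t) * n = e + (2 * n : ℕ) := by push_cast; ring
  rw [hlead, htail, hend, zpow_add₀ hσ.ne_zero e, zpow_add₀ hσ.ne_zero e, zpow_natCast,
    zpow_natCast, mul_smul, mul_smul, ← smul_sub, h.u3_mul_minorLucas_sub]

end StraighteningRel

end BarWeights

section TailOrder

/-- The strict partial order `b ∈ S(a)` on exponents: the order of the lower terms allowed in
`B[a]`. -/
def IsTail (b a : Idx) : Prop :=
  b ∈ Sset a

theorem isTail_iff {a b : Idx} : IsTail b a ↔ ∃ s r : ℕ, 0 < s + r ∧ b.1 + s = a.1 ∧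
    b.2.1 + r = a.2.1 + 2 * s ∧ b.2.2.1 + s = a.2.2.1 + 2 * r ∧ b.2.2.2 + r = a.2.2.2 := by
  obtain ⟨a3, a2, a1, a0⟩ := a
  obtain ⟨b3, b2, b1, b0⟩ := b
  simp only [IsTail, Sset, tri, Set.mem_ofPred_eq, ne_eq, Prod.mk.injEq]
  constructor
  · rintro ⟨⟨s, r, h⟩, hne⟩
    exact ⟨s, r, by omega⟩
  · rintro ⟨s, r, h⟩
    exact ⟨⟨s, r, by omega⟩, by omega⟩

theorem not_isTail_of_adjacent {a b : Idx} (ha : a.1 = 0 ∧ a.2.1 = 0 ∨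
    a.1 = 0 ∧ a.2.2.2 = 0 ∨ a.2.2.1 = 0 ∧ a.2.2.2 = 0) : ¬ IsTail b a := by
  rw [isTail_iff]
  rintro ⟨s, r, hsr⟩
  omega

-- Each step `(-1,2,-1,0)` or `(0,-1,2,-1)` lowers `2a₃ + a₂ + a₁ + 2a₀` by one.
theorem IsTail.weight_lt {a b : Idx} (h : IsTail b a) :
    2 * b.1 + b.2.1 + b.2.2.1 + 2 * b.2.2.2 < 2 * a.1 + a.2.1 + a.2.2.1 + 2 * a.2.2.2 := by
  obtain ⟨s, r, hsr⟩ := isTail_iff.1 h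
  omega

instance : IsStrictOrder Idx IsTail where
  irrefl _ h := h.2 rfl
  trans a b c hab hbc := by
    obtain ⟨s, r, h⟩ := isTail_iff.1 hab
    obtain ⟨s', r', h'⟩ := isTail_iff.1 hbc
    exact isTail_iff.2 ⟨s + s', r + r', by omega⟩

instance : IsWellFounded Idx IsTail where
  wf := Subrelation.wf IsTail.weight_lt (measure _).wf

theorem IsTail.add_right {a b : Idx} (h : IsTail b a) (e : Idx) : IsTail (b + e) (a + e) := by
  obtain ⟨s, r, hsr⟩ := isTail_iff.1 h
  refine isTail_iff.2 ⟨s, r, ?_⟩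
  simp only [Prod.fst_add, Prod.snd_add]
  omega

theorem Nnum_eq_of_isTail {a b : Idx} (h : IsTail b a) : Nnum b = Nnum a := by
  obtain ⟨⟨s, r, h3, h2, h1, h0⟩, -⟩ := h
  simp only [Nnum, h3, h2, h1, h0]
  ring

/-- The exponent read backwards, matching `opRev`. -/
def revIdx (a : Idx) : Idx :=
  (a.2.2.2, a.2.2.1, a.2.1, a.1)

theorem isTail_revIdx {a b : Idx} (h : IsTail b a) : IsTail (revIdx b) (revIdx a) := by
  obtain ⟨s, r, hsr⟩ := isTail_iff.1 h
  refine isTail_iff.2 ⟨r, s, ?_⟩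
  simp only [revIdx]
  omega

end TailOrder

section DualPBW

open MulOpposite

variable {K R : Type*} [Field K] [Ring R] [Algebra K R] {A : Subring K} {q : K} {u : Fin 4 → R}

/-- The dual PBW element `E[a]` of a family `u`. -/
def dualPBW (q : K) (u : Fin 4 → R) (a : Idx) : R :=
  q ^ bexp a • (u 3 ^ a.1 * u 2 ^ a.2.1 * u 1 ^ a.2.2.1 * u 0 ^ a.2.2.2)

/-- `X ∈ E[a] + ∑_{b ∈ S(a)} q A · E[b]`. -/
abbrev HasPBWLeadingTerm (A : Subring K) (q : K) (u : Fin 4 → R) (X : R) (a : Idx) : Prop :=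
  HasLeadingTerm A q IsTail (dualPBW q u) X a

theorem dualPBW_opRev (a : Idx) : dualPBW q (opRev u) (revIdx a) = op (dualPBW q u a) := by
  simp only [dualPBW, revIdx, bexp, opRev_zero, opRev_one, opRev_two, opRev_three, op_smul, op_mul,
    op_pow, mul_assoc]
  congr 2
  ring

theorem hasPBWLeadingTerm_op {X : R} {a : Idx} (hX : HasPBWLeadingTerm A q u X a) :
    HasPBWLeadingTerm A q (opRev u) (op X) (revIdx a) := by
  refine hX.map (opLinearEquiv K).toLinearMap ?_ fun b hb => ?_
  · change HasLeadingTerm A q IsTail _ (op (dualPBW q u a)) _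
    rw [← dualPBW_opRev]
    exact .self
  · change q • op (dualPBW q u b) ∈ _
    rw [← dualPBW_opRev]
    exact smul_mem_qLattice (isTail_revIdx hb)

theorem hasPBWLeadingTerm_of_op {X : R} {a : Idx}
    (hX : HasPBWLeadingTerm A q (opRev u) (op X) (revIdx a)) : HasPBWLeadingTerm A q u X a := by
  have hE (b : Idx) : (opLinearEquiv K).symm (dualPBW q (opRev u) b) = dualPBW q u (revIdx b) :=
    (opLinearEquiv K).symm_apply_eq.2 (dualPBW_opRev (revIdx b))
  refine hX.map (opLinearEquiv K).symm.toLinearMap ?_ fun b hb => ?_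
  · rw [LinearEquiv.coe_coe, hE]
    exact .self
  · rw [LinearEquiv.coe_coe, hE]
    exact smul_mem_qLattice (isTail_revIdx hb)

theorem HasLeadingTerm.pow_smul_mul_left (hq : q ∈ A) {y : R} {k : Idx → ℕ} {e : Idx}
    (hy : ∀ a, HasPBWLeadingTerm A q u (q ^ k a • (y * dualPBW q u a)) (a + e))
    (hk : ∀ {a b}, IsTail b a → k b ≤ k a) {X : R} {a : Idx} (hX : HasPBWLeadingTerm A q u X a) :
    HasPBWLeadingTerm A q u (q ^ k a • (y * X)) (a + e) := by
  refine hX.map (q ^ k a • LinearMap.mulLeft K y) (hy a) fun b hb => ?_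
  obtain ⟨d, hd⟩ := Nat.exists_eq_add_of_le (hk hb)
  have hmem := (hy b).pow_smul_mem hq (hb.add_right e) d.succ_pos
  rw [smul_smul, ← pow_add] at hmem
  rw [LinearMap.smul_apply, LinearMap.mulLeft_apply, smul_smul, ← pow_succ', hd]
  convert hmem using 3
  omega

theorem pow_smul_u3_mul_dualPBW (a : Idx) :
    q ^ a.1 • (u 3 * dualPBW q u a) = dualPBW q u (a + (1, 0, 0, 0)) := by
  simp only [dualPBW, bexp, Prod.fst_add, Prod.snd_add, add_zero, pow_succ', mul_smul_comm,
    mul_assoc, smul_smul, ← pow_add, Nat.choose_succ_succ' _ 1, Nat.choose_one_right, add_assoc,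
    Nat.reduceAdd]

namespace StraighteningRel

theorem pow_smul_u2_mul_dualPBW (h : StraighteningRel q u) (a : Idx) :
    q ^ (2 * a.1 + a.2.1) • (u 2 * dualPBW q u a) = dualPBW q u (a + (0, 1, 0, 0)) := by
  have hq := h.ne_zero
  simp only [dualPBW, bexp, Prod.fst_add, Prod.snd_add, add_zero, pow_succ', mul_smul_comm,
    mul_assoc, (h.u2_u3.pow_right hq a.1).mul_mul_eq, smul_smul, Nat.choose_succ_succ' _ 1,
    Nat.choose_one_right]
  congr 1
  simp only [← zpow_natCast, ← zpow_add₀ hq]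
  congr 1
  push_cast
  ring

theorem pow_smul_minor31_mul_dualPBW (h : StraighteningRel q u) (a : Idx) :
    q ^ (3 * a.1 + 2 * a.2.1 + a.2.2.1) • (minor31 q u * dualPBW q u a) =
      dualPBW q u (a + (1, 0, 1, 0)) -
        q ^ (a.1 + a.2.2.1 + 1) • dualPBW q u (a + (0, 2, 0, 0)) := by
  have hq := h.ne_zero
  have h3 : QCommute q (-2) (minor31 q u) (u 3) := h.minor31_qCommute 3
  have h2 : QCommute q 0 (minor31 q u) (u 2) := h.minor31_qCommute 2
  have h23 := (h.u2_u3.pow_left hq a.2.1).mul_mul_eq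
  simp only [dualPBW, bexp, Prod.fst_add, Prod.snd_add, add_zero, mul_smul_comm, mul_assoc,
    (h3.pow_right hq a.1).mul_mul_eq, (h2.pow_right hq a.2.1).mul_mul_eq]
  simp only [minor31, qMinor, sub_mul, mul_sub, smul_mul_assoc, mul_smul_comm, mul_assoc, h23]
  simp only [smul_smul, smul_sub, pow_succ _ a.1, pow_succ' _ a.2.2.1, pow_succ _ (a.2.1 + 1),
    pow_succ _ a.2.1, mul_assoc]
  congr 2 <;> simp only [Nat.choose_succ_succ' _ 1, Nat.choose_one_right, ← zpow_natCast,
    ← zpow_add₀ hq] <;> congr 1 <;> push_cast <;> ring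

end StraighteningRel

theorem HasLeadingTerm.u3_mul (hq : q ∈ A) {X : R} {a : Idx} (hX : HasPBWLeadingTerm A q u X a) :
    HasPBWLeadingTerm A q u (q ^ a.1 • (u 3 * X)) (a + (1, 0, 0, 0)) := by
  refine hX.pow_smul_mul_left hq (k := fun a => a.1) (fun a => ?_) fun hba => ?_
  · rw [pow_smul_u3_mul_dualPBW]
    exact .self
  · obtain ⟨s, r, hsr⟩ := isTail_iff.1 hba
    omega

theorem HasLeadingTerm.u2_mul (h : StraighteningRel q u) (hq : q ∈ A) {X : R} {a : Idx}
    (hX : HasPBWLeadingTerm A q u X a) :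
    HasPBWLeadingTerm A q u (q ^ (2 * a.1 + a.2.1) • (u 2 * X)) (a + (0, 1, 0, 0)) := by
  refine hX.pow_smul_mul_left hq (k := fun a => 2 * a.1 + a.2.1) (fun a => ?_) fun hba => ?_
  · rw [h.pow_smul_u2_mul_dualPBW]
    exact .self
  · obtain ⟨s, r, hsr⟩ := isTail_iff.1 hba
    omega

theorem HasLeadingTerm.minor31_mul (h : StraighteningRel q u) (hq : q ∈ A) {X : R} {a : Idx}
    (hX : HasPBWLeadingTerm A q u X a) :
    HasPBWLeadingTerm A q u (q ^ (3 * a.1 + 2 * a.2.1 + a.2.2.1) • (minor31 q u * X))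
      (a + (1, 0, 1, 0)) := by
  refine hX.pow_smul_mul_left hq (k := fun a => 3 * a.1 + 2 * a.2.1 + a.2.2.1) (fun a => ?_)
    fun hba => ?_
  · have htail : IsTail (a + (0, 2, 0, 0)) (a + (1, 0, 1, 0)) :=
      isTail_iff.2 ⟨1, 0, by simp⟩
    rw [h.pow_smul_minor31_mul_dualPBW]
    exact HasLeadingTerm.self.sub (HasLeadingTerm.self.pow_smul_mem hq htail (Nat.succ_pos _))
  · obtain ⟨s, r, hsr⟩ := isTail_iff.1 hba
    omega

theorem HasLeadingTerm.mul_u0 (hq : q ∈ A) {X : R} {a : Idx} (hX : HasPBWLeadingTerm A q u X a) :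
    HasPBWLeadingTerm A q u (q ^ a.2.2.2 • (X * u 0)) (a + (0, 0, 0, 1)) :=
  hasPBWLeadingTerm_of_op ((hasPBWLeadingTerm_op hX).u3_mul hq)

theorem HasLeadingTerm.mul_u1 (h : StraighteningRel q u) (hq : q ∈ A) {X : R} {a : Idx}
    (hX : HasPBWLeadingTerm A q u X a) :
    HasPBWLeadingTerm A q u (q ^ (2 * a.2.2.2 + a.2.2.1) • (X * u 1)) (a + (0, 0, 1, 0)) :=
  hasPBWLeadingTerm_of_op ((hasPBWLeadingTerm_op hX).u2_mul h.reverse hq)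

theorem HasLeadingTerm.mul_minor20 (h : StraighteningRel q u) (hq : q ∈ A) {X : R} {a : Idx}
    (hX : HasPBWLeadingTerm A q u X a) :
    HasPBWLeadingTerm A q u (q ^ (3 * a.2.2.2 + 2 * a.2.2.1 + a.2.1) • (X * minor20 q u))
      (a + (0, 1, 0, 1)) := by
  have hop := (hasPBWLeadingTerm_op hX).minor31_mul h.reverse hq
  rw [minor31_opRev] at hop
  exact hasPBWLeadingTerm_of_op hop

end DualPBW

section DualCanonicalElements

open MulOpposite

variable {K R : Type*} [Field K] [Ring R] [Algebra K R] {A : Subring K} {q : K} {u : Fin 4 → R}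
  {bar : K →+* K} {σ : R →ₛₗ[bar] R} {s t : ℤ}

/-- The element that turns out to be `B[m,0,0,m]`; the power of `q` makes the coefficient of
`E[m,0,0,m]` equal to `1`. -/
def diagElt (q : K) (u : Fin 4 → R) (m : ℕ) : R :=
  q ^ (4 * m.choose 2) • minorLucas q u (m + 1)

/-- The element that turns out to be `B[m+1,0,0,m]`. -/
def cornerElt (q : K) (u : Fin 4 → R) (m : ℕ) : R :=
  q ^ (4 * m.choose 2 + 3 * m) • cornerLucas q u m

/-- The element that turns out to be `B[m,1,0,m]`. -/
def midElt (q : K) (u : Fin 4 → R) : ℕ → R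
  | 0 => u 2
  | m + 1 => q ^ (3 * m) • (cornerElt q u m * minor20 q u)

theorem diagElt_zero : diagElt q u 0 = 1 := by
  simp [diagElt, minorLucas_one]

theorem cornerElt_zero : cornerElt q u 0 = u 3 := by
  simp [cornerElt, cornerLucas, minorLucas]

theorem midElt_zero : midElt q u 0 = u 2 := rfl

theorem midElt_succ (m : ℕ) :
    midElt q u (m + 1) = q ^ (3 * m) • (cornerElt q u m * minor20 q u) := rfl

theorem StraighteningRel.cornerElt_succ (h : StraighteningRel q u) (m : ℕ) :
    cornerElt q u (m + 1) = q ^ (m + 1) • (u 3 * diagElt q u (m + 1))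
      - q ^ (2 * m + 3) • (u 2 * (q ^ (3 * m) • (minor31 q u * diagElt q u m))) := by
  have hlucas := congrArg (q ^ (4 * m.choose 2 + 5 * m + 1) • ·) (h.u3_mul_minorLucas_sub (m + 1))
  simp only [cornerElt, diagElt, Nat.choose_succ_succ' m 1, Nat.choose_one_right, mul_smul_comm,
    mul_assoc] at hlucas ⊢
  linear_combination (norm := skip) -hlucas
  match_scalars <;> ring

theorem StraighteningRel.diagElt_succ (h : StraighteningRel q u) (m : ℕ) :
    diagElt q u (m + 1) = q ^ m • (cornerElt q u m * u 0)
      - q ^ (2 * m + 2) • (midElt q u m * u 1) := by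
  cases m with
  | zero => simp [diagElt, cornerElt_zero, midElt_zero, minorLucas_two, minor30, qMinor]
  | succ m =>
    rw [diagElt, h.minorLucas_add_three, midElt_succ, cornerElt, cornerElt]
    simp only [Nat.choose_succ_succ' _ 1, Nat.choose_one_right, smul_mul_assoc]
    match_scalars <;> ring

section LeadingTerms

theorem hasPBWLeadingTerm_one : HasPBWLeadingTerm A q u 1 (0, 0, 0, 0) := by
  simpa [dualPBW, bexp] using
    HasLeadingTerm.self (A := A) (q := q) (r := IsTail) (E := dualPBW q u) (a := (0, 0, 0, 0))

variable (h : StraighteningRel q u) (hq : q ∈ A)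
include h hq

theorem hasPBWLeadingTerm_midElt_succ {m : ℕ}
    (hcorner : HasPBWLeadingTerm A q u (cornerElt q u m) (m + 1, 0, 0, m)) :
    HasPBWLeadingTerm A q u (midElt q u (m + 1)) (m + 1, 1, 0, m + 1) :=
  hcorner.mul_minor20 h hq

theorem hasPBWLeadingTerm_diagElt_succ {m : ℕ}
    (hcorner : HasPBWLeadingTerm A q u (cornerElt q u m) (m + 1, 0, 0, m))
    (hmid : HasPBWLeadingTerm A q u (midElt q u m) (m, 1, 0, m)) :
    HasPBWLeadingTerm A q u (diagElt q u (m + 1)) (m + 1, 0, 0, m + 1) := by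
  have htail : IsTail (m, 1, 1, m) (m + 1, 0, 0, m + 1) := isTail_iff.2 ⟨1, 1, by simp⟩
  have hmem := (hmid.mul_u1 h hq).pow_smul_mem hq htail two_pos
  rw [smul_smul, ← pow_add, add_comm 2] at hmem
  rw [h.diagElt_succ]
  exact (hcorner.mul_u0 hq).sub hmem

theorem hasPBWLeadingTerm_cornerElt_succ {m : ℕ}
    (hdiag : HasPBWLeadingTerm A q u (diagElt q u m) (m, 0, 0, m))
    (hdiag' : HasPBWLeadingTerm A q u (diagElt q u (m + 1)) (m + 1, 0, 0, m + 1)) :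
    HasPBWLeadingTerm A q u (cornerElt q u (m + 1)) (m + 2, 0, 0, m + 1) := by
  have htail : IsTail (m + 1, 1, 1, m) (m + 2, 0, 0, m + 1) := isTail_iff.2 ⟨1, 1, by simp⟩
  have hmem := ((hdiag.minor31_mul h hq).u2_mul h hq).pow_smul_mem hq htail one_pos
  rw [smul_smul, ← pow_add, add_comm 1] at hmem
  rw [h.cornerElt_succ]
  exact (hdiag'.u3_mul hq).sub hmem

theorem hasPBWLeadingTerm_diagElt_cornerElt_midElt (m : ℕ) :
    HasPBWLeadingTerm A q u (diagElt q u m) (m, 0, 0, m) ∧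
    HasPBWLeadingTerm A q u (cornerElt q u m) (m + 1, 0, 0, m) ∧
    HasPBWLeadingTerm A q u (midElt q u m) (m, 1, 0, m) := by
  induction m with
  | zero =>
    rw [diagElt_zero, cornerElt_zero, midElt_zero]
    have hone : HasPBWLeadingTerm A q u 1 (0, 0, 0, 0) := hasPBWLeadingTerm_one
    exact ⟨hone, by simpa using hone.u3_mul hq, by simpa using hone.u2_mul h hq⟩
  | succ m ih =>
    obtain ⟨hdiag, hcorner, hmid⟩ := ih
    have hdiag' := hasPBWLeadingTerm_diagElt_succ h hq hcorner hmid
    exact ⟨hdiag', hasPBWLeadingTerm_cornerElt_succ h hq hdiag hdiag',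
      hasPBWLeadingTerm_midElt_succ h hq hcorner⟩

end LeadingTerms

/-- The characterization of the dual canonical basis element of index `a`, with the exact
eigenvalue of `σ` left open: it is determined by the leading term. -/
def IsDualCanonical (A : Subring K) (q : K) (u : Fin 4 → R) (σ : R →ₛₗ[bar] R) (X : R)
    (a : Idx) : Prop :=
  HasPBWLeadingTerm A q u X a ∧ ∃ n, HasBarWeight q σ n X

theorem IsDualCanonical.eq {B : Idx → R} {X : R} {a : Idx}
    (hX : IsDualCanonical A q u σ X a) (hq : q ∈ A) (hq₀ : q ≠ 0)
    (hbar : ∀ x ∈ A, bar (q * x) = q * x → q * x = 0) (hE : LinearIndependent K (dualPBW q u))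
    (hB : ∀ a, HasPBWLeadingTerm A q u (B a) a)
    (hσB : ∀ a, HasBarWeight q σ (-Nnum a) (B a)) : B a = X := by
  obtain ⟨hlead, n, hweight⟩ := hX
  exact eq_of_hasLeadingTerm_of_eigenvector hq hbar hE hB hσB
    (fun a b hba => by rw [Nnum_eq_of_isTail hba]) (fun a => zpow_ne_zero _ hq₀) hlead hweight

theorem IsDualCanonical.of_op {X : R} {a : Idx}
    (hX : IsDualCanonical A q (opRev u) (opBar σ) (op X) (revIdx a)) :
    IsDualCanonical A q u σ X a :=
  ⟨hasPBWLeadingTerm_of_op hX.1, hX.2.imp fun _ => hasBarWeight_op_iff.1⟩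

theorem hasBarWeight_opRev (hu : ∀ i : Fin 4, HasBarWeight q σ (s + t * (i : ℕ)) (u i))
    (i : Fin 4) : HasBarWeight q (opBar σ) (s + 3 * t + -t * (i : ℕ)) (opRev u i) := by
  refine hasBarWeight_op_iff.2 ((hu i.rev).congr ?_)
  have hrev : ((i.rev : ℕ) : ℤ) = 3 - (i : ℕ) := by rw [Fin.val_rev]; omega
  rw [hrev]
  ring

section BarInvariance

variable (h : StraighteningRel q u) (hq : q ∈ A) (hσ : IsBarAntiautomorphism q σ)
  (hu : ∀ i : Fin 4, HasBarWeight q σ (s + t * (i : ℕ)) (u i))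
include h hq hσ hu

theorem isDualCanonical_diagElt (m : ℕ) :
    IsDualCanonical A q u σ (diagElt q u m) (m, 0, 0, m) :=
  ⟨(hasPBWLeadingTerm_diagElt_cornerElt_midElt h hq m).1, _,
    (h.hasBarWeight_minorLucas hσ hu (m + 1)).pow_smul hσ _⟩

theorem isDualCanonical_cornerElt (m : ℕ) :
    IsDualCanonical A q u σ (cornerElt q u m) (m + 1, 0, 0, m) :=
  ⟨(hasPBWLeadingTerm_diagElt_cornerElt_midElt h hq m).2.1, _,
    (h.hasBarWeight_cornerLucas hσ hu m).pow_smul hσ _⟩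

theorem isDualCanonical_midElt (m : ℕ) :
    IsDualCanonical A q u σ (midElt q u m) (m, 1, 0, m) := by
  refine ⟨(hasPBWLeadingTerm_diagElt_cornerElt_midElt h hq m).2.2, ?_⟩
  cases m with
  | zero => exact ⟨_, hu 2⟩
  | succ m =>
    have hcorner := (h.hasBarWeight_cornerLucas hσ hu m).pow_smul hσ (4 * m.choose 2 + 3 * m)
    have hcomm := (h.minor20_cornerLucas m).smul_right (q ^ (4 * m.choose 2 + 3 * m))
    exact ⟨_, (hcorner.mul hσ (h.hasBarWeight_minor20 hσ hu) hcomm).pow_smul hσ _⟩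

theorem diag_recursion_right {B : Idx → R}
    (hB : ∀ {X a}, IsDualCanonical A q u σ X a → B a = X) (m : ℕ) :
    B (m + 1, 0, 0, m + 1) =
      q ^ m • (B (m + 1, 0, 0, m) * u 0) - q ^ (2 * m + 2) • (B (m, 1, 0, m) * u 1) := by
  rw [hB (isDualCanonical_diagElt h hq hσ hu (m + 1)),
    hB (isDualCanonical_cornerElt h hq hσ hu m), hB (isDualCanonical_midElt h hq hσ hu m)]
  exact h.diagElt_succ m

theorem diag_recursion_left {B : Idx → R}
    (hB : ∀ {X a}, IsDualCanonical A q u σ X a → B a = X) (m : ℕ) :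
    B (m + 1, 0, 0, m + 1) =
      q ^ m • (u 3 * B (m, 0, 0, m + 1)) - q ^ (2 * m + 2) • (u 2 * B (m, 0, 1, m)) :=
  op_injective <| diag_recursion_right (B := fun a => op (B (revIdx a))) h.reverse hq hσ.op
    (hasBarWeight_opRev hu) (fun hX => congrArg op (hB (IsDualCanonical.of_op hX))) m

end BarInvariance

end DualCanonicalElements

section IntegralCoefficients

open Polynomial

variable {K : Type*} [Field K] {q : K} {bar : K →+* K}

/-- The subring `ℤ[q]` of coefficients. -/
def intAdjoin (q : K) : Subring K :=
  (aeval q : ℤ[X] →ₐ[ℤ] K).range.toSubring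

theorem aeval_mem_intAdjoin (p : ℤ[X]) : aeval q p ∈ intAdjoin q :=
  ⟨p, rfl⟩

theorem self_mem_intAdjoin : q ∈ intAdjoin q :=
  ⟨X, aeval_X q⟩

theorem aeval_reverse_eq (hq : q ≠ 0) (p : ℤ[X]) :
    aeval q p.reverse = q ^ p.natDegree * aeval q⁻¹ p := by
  let _ : Invertible q⁻¹ := ⟨q, mul_inv_cancel₀ hq, inv_mul_cancel₀ hq⟩
  have hrev : aeval q p.reverse * q⁻¹ ^ p.natDegree = aeval q⁻¹ p :=
    eval₂_reverse_mul_pow (algebraMap ℤ K) q⁻¹ p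
  rw [← hrev, mul_left_comm, ← mul_pow, mul_inv_cancel₀ hq, one_pow, mul_one]

theorem eq_zero_of_bar_mul_eq_self [Algebra ℚ K] (hq : Transcendental ℚ q) (hbar : bar q = q⁻¹)
    {x : K} (hx : x ∈ intAdjoin q) (hfix : bar (q * x) = q * x) : q * x = 0 := by
  obtain ⟨p, rfl : aeval q p = x⟩ := hx
  by_contra hne
  have hp : p ≠ 0 := by rintro rfl; simp at hne
  have hXp : X * p ≠ 0 := mul_ne_zero X_ne_zero hp
  have hbar_eval : aeval q⁻¹ (X * p) = aeval q (X * p) := by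
    have hfix' : bar (aeval q (X * p)) = aeval q (X * p) := by simpa using hfix
    rwa [aeval_def, hom_eval₂, hbar, RingHom.ext_int (bar.comp _) (algebraMap ℤ K)] at hfix'
  have hpal : (X * p).reverse = X ^ (X * p).natDegree * (X * p) := by
    apply transcendental_iff_injective.1 (hq.restrictScalars Int.cast_injective)
    rw [aeval_reverse_eq (left_ne_zero_of_mul hne), hbar_eval, map_mul (aeval q) (X ^ _),
      aeval_X_pow]
  have hdeg := reverse_natDegree_le (X * p)
  rw [hpal, natDegree_X_pow_mul _ hXp, natDegree_X_mul hp] at hdeg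
  omega

end IntegralCoefficients

section ConcreteAlgebra

theorem qq_transcendental : Transcendental ℚ qq := by
  rw [qq, ← RatFunc.algebraMap_X]
  exact (transcendental_algebraMap_iff (IsFractionRing.injective (Polynomial ℚ) F)).2
    (Polynomial.transcendental_X ℚ)

theorem qq_ne_zero : qq ≠ 0 :=
  RatFunc.X_ne_zero

theorem one_sub_qq_inv_sq_ne_zero : 1 - qq⁻¹ ^ 2 ≠ 0 := by
  intro h
  have hsq : qq ^ 2 = 1 := by
    rw [← inv_inv (qq ^ 2), ← inv_pow, ← sub_eq_zero.1 h, inv_one]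
  exact qq_transcendental (.of_pow two_pos (hsq ▸ isAlgebraic_one))

/-- The generators `u₀, u₁, u₂, u₃` of `S` as a family. -/
def usVec : Fin 4 → Sgen :=
  ![us0, us1, us2, us3]

theorem linearIndependent_dualPBW_usVec (hPBW : LinearIndependent F mon) :
    LinearIndependent F (dualPBW qq usVec) :=
  hPBW.units_smul fun a => Units.mk0 (qq ^ bexp a) (pow_ne_zero _ qq_ne_zero)

/-- The commutator with `A`, the derivation of `U` that raises the index of `uᵢ`. -/
def adA : U →ₗ[F] U :=
  LinearMap.mulLeft F Aelt - LinearMap.mulRight F Aelt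

theorem adA_mul (x y : U) : adA (x * y) = adA x * y + x * adA y := by
  simp only [adA, LinearMap.sub_apply, LinearMap.mulLeft_apply, LinearMap.mulRight_apply,
    sub_mul, mul_sub, mul_assoc, sub_add_sub_cancel]

theorem sq_mul_inv_pow_add_two {K : Type*} [Field K] {c : K} (hc : c ≠ 0) (k : ℕ) :
    c ^ 2 * c⁻¹ ^ (k + 2) = c⁻¹ ^ k := by
  rw [pow_add, mul_left_comm, ← mul_pow, mul_inv_cancel₀ hc, one_pow, mul_one]

theorem adA_u0 : adA u0 = (1 - qq⁻¹ ^ 2) ^ 2 • u1 := by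
  rw [u1, inv_pow (1 - _), smul_inv_smul₀ (pow_ne_zero 2 one_sub_qq_inv_sq_ne_zero)]
  rfl

theorem adA_u1 : adA u1 = (1 - qq⁻¹ ^ 2) ^ 2 • u2 := by
  have hscalar : (1 - qq⁻¹ ^ 2) ^ 2 * (1 - qq⁻¹ ^ 2)⁻¹ ^ 4 = (1 - qq⁻¹ ^ 2)⁻¹ ^ 2 :=
    sq_mul_inv_pow_add_two one_sub_qq_inv_sq_ne_zero 2
  rw [u1, u2, map_smul, smul_smul, hscalar]
  rfl

theorem adA_u2 : adA u2 = (1 - qq⁻¹ ^ 2) ^ 2 • u3 := by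
  have hscalar : (1 - qq⁻¹ ^ 2) ^ 2 * (1 - qq⁻¹ ^ 2)⁻¹ ^ 6 = (1 - qq⁻¹ ^ 2)⁻¹ ^ 4 :=
    sq_mul_inv_pow_add_two one_sub_qq_inv_sq_ne_zero 4
  rw [u2, u3, map_smul, smul_smul, hscalar]
  rfl

theorem straighteningRel_usVec (h01 : QCommute qq (-2) us0 us1) (h12 : QCommute qq (-2) us1 us2)
    (h23 : QCommute qq (-2) us2 us3) : StraighteningRel qq usVec :=
  .of_injective Sgen.val Subtype.val_injective <|
    .of_derivation qq_ne_zero adA adA_mul (pow_ne_zero 2 one_sub_qq_inv_sq_ne_zero) adA_u0 adA_u1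
      adA_u2 (congrArg Subtype.val h01) (congrArg Subtype.val h12) (congrArg Subtype.val h23)

end ConcreteAlgebra

section DualCanonicalBasis

variable {bar : F →+* F} {σ : Sgen → Sgen} {B : Idx → Sgen}

namespace SigmaHyp

/-- `σ` bundled as a `bar`-semilinear map. -/
def toSemilinearMap (hσ : SigmaHyp bar σ) : Sgen →ₛₗ[bar] Sgen where
  toFun := σ
  map_add' := hσ.2.2.1
  map_smul' := hσ.2.2.2.2.1

theorem isBarAntiautomorphism (hσ : SigmaHyp bar σ) :
    IsBarAntiautomorphism (R := Sgen) qq hσ.toSemilinearMap := by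
  obtain ⟨hbar, hbij, -, hmul, -⟩ := id hσ
  refine ⟨qq_ne_zero, hbar, ?_, hmul⟩
  obtain ⟨y, hy⟩ := hbij.2 1
  change σ 1 = 1
  simpa [hy] using (hmul y 1).symm

theorem hasBarWeight_usVec (hσ : SigmaHyp bar σ) :
    ∀ i : Fin 4, HasBarWeight qq hσ.toSemilinearMap (0 + 2 * (i : ℕ)) (usVec i) := by
  obtain ⟨-, -, -, -, -, h0, h1, h2, h3⟩ := id hσ
  intro i
  match i with
  | 0 => exact h0.trans (one_smul F us0).symm
  | 1 => exact h1
  | 2 => exact h2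
  | 3 => exact h3

end SigmaHyp

namespace DCB

theorem hasBarWeight (hB : DCB bar σ B) (hσ : SigmaHyp bar σ) (a : Idx) :
    HasBarWeight qq hσ.toSemilinearMap (-Nnum a) (B a) :=
  (hB a).2

theorem hasPBWLeadingTerm (hB : DCB bar σ B) (a : Idx) :
    HasPBWLeadingTerm (intAdjoin qq) qq usVec (B a) a := by
  obtain ⟨φ, hφ, hsum⟩ := (hB a).1
  change B a - Ee a ∈ qLattice _ qq Ee {b | IsTail b a}
  rw [hsum]
  refine Submodule.sum_mem _ fun b hb => ?_
  have hmem : qq • Ee b ∈ qLattice (intAdjoin qq) qq Ee {b | IsTail b a} :=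
    smul_mem_qLattice (hφ hb)
  have := Submodule.smul_mem _ (⟨_, aeval_mem_intAdjoin (φ b)⟩ : intAdjoin qq) hmem
  rwa [Subring.smul_def, smul_smul, mul_comm] at this

theorem eq_Ee_of_forall_not_isTail (hB : DCB bar σ B) {a : Idx} (ha : ∀ b, ¬ IsTail b a) :
    B a = Ee a := by
  have hmem : B a - Ee a ∈ qLattice (intAdjoin qq) qq Ee {b | IsTail b a} :=
    hB.hasPBWLeadingTerm a
  have hempty : {b | IsTail b a} = ∅ := Set.eq_empty_iff_forall_notMem.2 ha
  rw [hempty, qLattice, Set.image_empty, Submodule.span_empty, Submodule.mem_bot] at hmem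
  exact sub_eq_zero.1 hmem

-- `uᵢ₊₁uᵢ` is itself a dual canonical basis element; comparing its bar weight with those of
-- `uᵢ` and `uᵢ₊₁` gives the commutation relation.
theorem straighteningRel (hB : DCB bar σ B) (hσ : SigmaHyp bar σ) :
    StraighteningRel qq usVec := by
  have hweight {a : Idx} (ha : ∀ b, ¬ IsTail b a) {x : Sgen} (hx : Ee a = x) :
      HasBarWeight qq hσ.toSemilinearMap (-Nnum a) x := by
    rw [← hx, ← hB.eq_Ee_of_forall_not_isTail ha]
    exact hB.hasBarWeight hσ a
  have hu := hσ.hasBarWeight_usVec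
  have hσ' := hσ.isBarAntiautomorphism
  refine straighteningRel_usVec ?_ ?_ ?_
  · exact hσ'.qCommute_of_weights (hu 0) (hu 1) (hweight (a := (0, 0, 1, 1))
      (fun _ => not_isTail_of_adjacent (by simp)) (by simp [Ee, mon, bexp, usVec]))
  · exact hσ'.qCommute_of_weights (hu 1) (hu 2) (hweight (a := (0, 1, 1, 0))
      (fun _ => not_isTail_of_adjacent (by simp)) (by simp [Ee, mon, bexp, usVec]))
  · exact hσ'.qCommute_of_weights (hu 2) (hu 3) (hweight (a := (1, 1, 0, 0))
      (fun _ => not_isTail_of_adjacent (by simp)) (by simp [Ee, mon, bexp, usVec]))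

theorem eq_of_isDualCanonical (hB : DCB bar σ B) (hσ : SigmaHyp bar σ)
    (hPBW : LinearIndependent F mon) {X : Sgen} {a : Idx}
    (hX : IsDualCanonical (intAdjoin qq) qq usVec hσ.toSemilinearMap X a) : B a = X :=
  hX.eq self_mem_intAdjoin qq_ne_zero
    (fun _ hx => eq_zero_of_bar_mul_eq_self qq_transcendental hσ.1 hx)
    (linearIndependent_dualPBW_usVec hPBW) hB.hasPBWLeadingTerm (hB.hasBarWeight hσ)

theorem diag_eq_right (hB : DCB bar σ B) (hσ : SigmaHyp bar σ) (hPBW : LinearIndependent F mon)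
    (m : ℕ) :
    B (m + 1, 0, 0, m + 1) = qq ^ (m : ℤ) • (B (m + 1, 0, 0, m) * us0)
      - qq ^ (2 * (m : ℤ) + 2) • (B (m, 1, 0, m) * us1) :=
  mod_cast diag_recursion_right (hB.straighteningRel hσ) self_mem_intAdjoin
    hσ.isBarAntiautomorphism hσ.hasBarWeight_usVec (hB.eq_of_isDualCanonical hσ hPBW) m

theorem diag_eq_left (hB : DCB bar σ B) (hσ : SigmaHyp bar σ) (hPBW : LinearIndependent F mon)
    (m : ℕ) :
    B (m + 1, 0, 0, m + 1) = qq ^ (m : ℤ) • (us3 * B (m, 0, 0, m + 1))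
      - qq ^ (2 * (m : ℤ) + 2) • (us2 * B (m, 0, 1, m)) :=
  mod_cast diag_recursion_left (hB.straighteningRel hσ) self_mem_intAdjoin
    hσ.isBarAntiautomorphism hσ.hasBarWeight_usVec (hB.eq_of_isDualCanonical hσ hPBW) m

theorem diag_eq_right_flip (hB : DCB bar σ B) (hσ : SigmaHyp bar σ)
    (hPBW : LinearIndependent F mon) (m : ℕ) :
    B (m + 1, 0, 0, m + 1) = qq ^ (3 * (m : ℤ) + 2) • (us0 * B (m + 1, 0, 0, m))
      - qq ^ (2 * (m : ℤ)) • (us1 * B (m, 1, 0, m)) := by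
  have hw := hB.hasBarWeight hσ
  have hu := hσ.hasBarWeight_usVec
  refine hσ.isBarAntiautomorphism.zpow_smul_mul_sub_eq_flip (hw _) (hw _) (hu 0) (hw _) (hu 1)
    (hB.diag_eq_right hσ hPBW m) ?_ ?_
  all_goals
    simp only [Nnum, Fin.coe_ofNat_eq_mod]
    push_cast
    ring

theorem diag_eq_left_flip (hB : DCB bar σ B) (hσ : SigmaHyp bar σ)
    (hPBW : LinearIndependent F mon) (m : ℕ) :
    B (m + 1, 0, 0, m + 1) = qq ^ (3 * (m : ℤ) + 2) • (B (m, 0, 0, m + 1) * us3)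
      - qq ^ (2 * (m : ℤ)) • (B (m, 0, 1, m) * us2) := by
  have hw := hB.hasBarWeight hσ
  have hu := hσ.hasBarWeight_usVec
  refine hσ.isBarAntiautomorphism.zpow_smul_mul_sub_eq_flip (hw _) (hu 3) (hw _) (hu 2) (hw _)
    (hB.diag_eq_left hσ hPBW m) ?_ ?_
  all_goals
    simp only [Nnum, Fin.coe_ofNat_eq_mod]
    push_cast
    ring

end DCB

theorem Bz_natCast (B : Idx → Sgen) (a b c d : ℕ) :
    Bz B ((a : ℤ), (b : ℤ), (c : ℤ), (d : ℤ)) = B (a, b, c, d) := by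
  simp [Bz]

end DualCanonicalBasis

/-- For every `n ≥ 1` the dual canonical basis elements satisfy
`B[n,0,0,n] = q^{n−1} B[n,0,0,n−1] u₀ − q^{2n} B[n−1,1,0,n−1] u₁`
`= q^{3n−1} u₀ B[n,0,0,n−1] − q^{2n−2} u₁ B[n−1,1,0,n−1]`
`= q^{n−1} u₃ B[n−1,0,0,n] − q^{2n} u₂ B[n−1,0,1,n−1]`
`= q^{3n−1} B[n−1,0,0,n] u₃ − q^{2n−2} B[n−1,0,1,n−1] u₂`. -/
theorem stmt12 (bar : F →+* F) (σ : Sgen → Sgen) (B : Idx → Sgen)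
    (hPBW : LinearIndependent F mon) (hσ : SigmaHyp bar σ) (hB : DCB bar σ B) (n : ℕ) (hn : 1 ≤ n) :
    Bz B ((n : ℤ), 0, 0, (n : ℤ))
        = qq ^ ((n : ℤ) - 1) • (Bz B ((n : ℤ), 0, 0, (n : ℤ) - 1) * us0)
          - qq ^ (2 * (n : ℤ)) • (Bz B ((n : ℤ) - 1, 1, 0, (n : ℤ) - 1) * us1) ∧
    Bz B ((n : ℤ), 0, 0, (n : ℤ))
        = qq ^ (3 * (n : ℤ) - 1) • (us0 * Bz B ((n : ℤ), 0, 0, (n : ℤ) - 1))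
          - qq ^ (2 * (n : ℤ) - 2) • (us1 * Bz B ((n : ℤ) - 1, 1, 0, (n : ℤ) - 1)) ∧
    Bz B ((n : ℤ), 0, 0, (n : ℤ))
        = qq ^ ((n : ℤ) - 1) • (us3 * Bz B ((n : ℤ) - 1, 0, 0, (n : ℤ)))
          - qq ^ (2 * (n : ℤ)) • (us2 * Bz B ((n : ℤ) - 1, 0, 1, (n : ℤ) - 1)) ∧
    Bz B ((n : ℤ), 0, 0, (n : ℤ))
        = qq ^ (3 * (n : ℤ) - 1) • (Bz B ((n : ℤ) - 1, 0, 0, (n : ℤ)) * us3)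
          - qq ^ (2 * (n : ℤ) - 2) • (Bz B ((n : ℤ) - 1, 0, 1, (n : ℤ) - 1) * us2) := by
  obtain ⟨m, rfl⟩ := Nat.exists_eq_add_of_le' hn
  have hpred : ((m + 1 : ℕ) : ℤ) - 1 = m := by push_cast; ring
  have hdouble : 2 * ((m + 1 : ℕ) : ℤ) = 2 * m + 2 := by push_cast; ring
  have htriple : 3 * ((m + 1 : ℕ) : ℤ) - 1 = 3 * m + 2 := by push_cast; ring
  rw [hpred, hdouble, htriple, add_sub_cancel_right, ← Nat.cast_zero, ← Nat.cast_one]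
  simp only [Bz_natCast]
  exact ⟨hB.diag_eq_right hσ hPBW m, hB.diag_eq_right_flip hσ hPBW m,
    hB.diag_eq_left hσ hPBW m, hB.diag_eq_left_flip hσ hPBW m⟩
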